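/- arXiv:2109.14504 — 3 statements merged into one kernel-verified Lean document; each statement's English description precedes it below -/
import Mathlib

section
/- Let 0 < p ≤ 1, p < q ≤ 2, and λ > 0, and set σ_j = j^{−λ} for j ∈ ℕ. There exist constants C, D, K ∈ (0,∞), with K depending only on p, q and λ, such that for all m ∈ ℕ and all 1 ≤ n < m satisfying n ≥ D·log(e·m/n), if G_{n,m} is an n×m random matrix with i.i.d. standard Gaussian entries, then with probability at least 1 − 2·exp(−C·n) one has rad_q(E^m_{p,σ}, ker G_{n,m}) ≤ K·(log(e·m/n)/n)^{λ + 1/p − 1/q}. -/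
open MeasureTheory ProbabilityTheory
open scoped ENNReal NNReal

/-- The `ℓ_p`-(quasi-)norm on `ℝ^m`, for `0 < p ≤ ∞`. -/
noncomputable def lpnorm (p : ℝ≥0∞) {m : ℕ} (x : Fin m → ℝ) : ℝ :=
  if p = ∞ then ⨆ j, |x j| else (∑ j, |x j| ^ p.toReal) ^ (1 / p.toReal)

/-- The `ℓ_p`-ellipsoid with semiaxes `σ`. -/
noncomputable def ellipsoid (p : ℝ≥0∞) {m : ℕ} (σ : Fin m → ℝ) : Set (Fin m → ℝ) :=
  {x | lpnorm p (fun j => x j / σ j) ≤ 1}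

/-- `rad_q(K, E)`: the supremum of the `ℓ_q`-norm over `K ∩ E`. -/
noncomputable def radq (q : ℝ≥0∞) {m : ℕ} (K E : Set (Fin m → ℝ)) : ℝ :=
  sSup (lpnorm q '' (K ∩ E))

/-- The distribution of an `n × m` random matrix with i.i.d. standard Gaussian entries. -/
noncomputable def gaussianMatrix (n m : ℕ) : Measure (Fin n → Fin m → ℝ) :=
  Measure.pi fun _ : Fin n => Measure.pi fun _ : Fin m => gaussianReal 0 1

/-- The kernel of a matrix `A ∈ ℝ^{n×m}`, as a subset of `ℝ^m`. -/
def kerSet {n m : ℕ} (A : Fin n → Fin m → ℝ) : Set (Fin m → ℝ) :=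
  {x | ∀ i, ∑ j, A i j * x j = 0}

/-- The Hölder conjugate `p*` of `p ∈ (1, ∞]`, as a real number
(with the convention `(∞ : ℝ≥0∞).toReal = 0`, so `pstar ∞ = 1`). -/
noncomputable def pstar (p : ℝ≥0∞) : ℝ := (1 - 1 / p.toReal)⁻¹

/-!
Outside an event of probability exponentially small in `n`, a Gaussian matrix `G` multiplies the
norm of a fixed vector by `√n` up to constant factors. A union bound over the integer points of an
`ℓ₁`-ball, whose multiples form a net of the sparse vectors, extends this to all `2s`-sparse vectors
at once, for `s` of order `n / log (e m / n)`. Given `x` in the kernel and in the ellipsoid, let `S`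
consist of the first `s` coordinates and of the `s` largest remaining ones. The coordinates outside
`S`, sorted into decreasing blocks of length `s`, are controlled by the `ℓ_p`-norm of `x` beyond its
first `s` coordinates, which is at most `σ_{s+1}`; since `p ≤ 1`, the block bounds are summable. As
`G x = 0`, the images of `x_S` and of the tail have the same norm, so the lower bound for `G` on
sparse vectors turns the tail estimate into one for all of `x`.
-/

open Real WithLp
open scoped RealInnerProductSpace

section GaussianConcentration

lemma map_inner_stdGaussian {E : Type*} [NormedAddCommGroup E] [InnerProductSpace ℝ E]
    [FiniteDimensional ℝ E] [MeasurableSpace E] [BorelSpace E] (x : E) :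
    (stdGaussian E).map (fun g => ⟪x, g⟫) = gaussianReal 0 (‖x‖₊ ^ 2) := by
  have hlaw := IsGaussian.map_eq_gaussianReal (μ := stdGaussian E) (innerSL ℝ x)
  rw [integral_strongDual_stdGaussian, variance_dual_stdGaussian, innerSL_apply_norm] at hlaw
  convert! hlaw
  ext
  simp

lemma mgf_sq_gaussianReal {v : ℝ≥0} {t : ℝ} (ht : 2 * t * v < 1) :
    mgf (fun x => x ^ 2) (gaussianReal 0 v) t = (√(1 - 2 * t * v))⁻¹ := by
  rcases eq_or_ne v 0 with rfl | hv
  · simp [mgf]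
  have integrand_eq (x : ℝ) : gaussianPDFReal 0 v x * exp (t * x ^ 2) =
      (√(2 * π * v))⁻¹ * exp (-((1 - 2 * t * v) / (2 * v)) * x ^ 2) := by
    rw [gaussianPDFReal, mul_assoc, ← exp_add]
    congr 2
    field_simp
    ring
  simp_rw [mgf, integral_gaussianReal_eq_integral_smul hv, smul_eq_mul, integrand_eq]
  rw [integral_const_mul, integral_gaussian, ← sqrt_inv, ← sqrt_mul (by positivity), ← sqrt_inv]
  congr 1
  field_simp

variable {n m : ℕ}

instance isProbabilityMeasure_gaussianMatrix : IsProbabilityMeasure (gaussianMatrix n m) := by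
  unfold gaussianMatrix
  infer_instance

lemma norm_toEuclideanLin_sq (A : Fin n → Fin m → ℝ) (x : EuclideanSpace ℝ (Fin m)) :
    ‖Matrix.toEuclideanLin (.of A) x‖ ^ 2 = ∑ i, ⟪x, toLp 2 (A i)⟫ ^ 2 := by
  rw [EuclideanSpace.real_norm_sq_eq]
  rfl

lemma mgf_norm_sq_gaussianMatrix (x : EuclideanSpace ℝ (Fin m)) {t : ℝ}
    (ht : 2 * t * ‖x‖ ^ 2 < 1) :
    mgf (fun A => ‖Matrix.toEuclideanLin (.of A) x‖ ^ 2) (gaussianMatrix n m) t =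
      (√(1 - 2 * t * ‖x‖ ^ 2))⁻¹ ^ n := by
  have row_mgf : ∫ g : Fin m → ℝ, exp (t * ⟪x, toLp 2 g⟫ ^ 2)
      ∂Measure.pi (fun _ => gaussianReal 0 1) = (√(1 - 2 * t * ‖x‖ ^ 2))⁻¹ := by
    have h := mgf_sq_gaussianReal (v := ‖x‖₊ ^ 2) (t := t) (by simpa using ht)
    rw [← map_inner_stdGaussian, ← map_pi_eq_stdGaussian,
      Measure.map_map (by fun_prop) (by fun_prop), mgf_map (by fun_prop) (by fun_prop)] at h
    simpa [mgf] using h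
  simp_rw [mgf, norm_toEuclideanLin_sq, Finset.mul_sum, exp_sum, gaussianMatrix]
  rw [integral_fintype_prod_eq_prod
    (f := fun (_ : Fin n) (g : Fin m → ℝ) => exp (t * ⟪x, toLp 2 g⟫ ^ 2))]
  simp [row_mgf]

lemma integrable_exp_norm_sq_gaussianMatrix (x : EuclideanSpace ℝ (Fin m)) {t : ℝ}
    (ht : 2 * t * ‖x‖ ^ 2 < 1) :
    Integrable (fun A => exp (t * ‖Matrix.toEuclideanLin (.of A) x‖ ^ 2))
      (gaussianMatrix n m) := by
  have : 0 < 1 - 2 * t * ‖x‖ ^ 2 := by linarith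
  rw [← mgf_pos_iff, mgf_norm_sq_gaussianMatrix x ht]
  positivity

lemma gaussianMatrix_real_norm_sq_le_le {x : EuclideanSpace ℝ (Fin m)} (hx : x ≠ 0) (c : ℝ) {t : ℝ}
    (ht : t ≤ 0) :
    (gaussianMatrix n m).real {A | ‖Matrix.toEuclideanLin (.of A) x‖ ^ 2 ≤ c * ‖x‖ ^ 2} ≤
      exp (-t * c) * (√(1 - 2 * t))⁻¹ ^ n := by
  have t_eq : t / ‖x‖ ^ 2 * ‖x‖ ^ 2 = t := div_mul_cancel₀ t (by simpa using hx)
  have hmgf : 2 * (t / ‖x‖ ^ 2) * ‖x‖ ^ 2 < 1 := by linarith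
  have chernoff := measure_le_le_exp_mul_mgf (c * ‖x‖ ^ 2)
    (div_nonpos_of_nonpos_of_nonneg ht (sq_nonneg ‖x‖))
    (integrable_exp_norm_sq_gaussianMatrix (n := n) x hmgf)
  have exponent_eq : -(t / ‖x‖ ^ 2) * (c * ‖x‖ ^ 2) = -t * c := by linear_combination -c * t_eq
  rwa [mgf_norm_sq_gaussianMatrix x hmgf, mul_assoc 2, t_eq, exponent_eq] at chernoff

lemma gaussianMatrix_real_le_norm_sq_le {x : EuclideanSpace ℝ (Fin m)} (hx : x ≠ 0) (c : ℝ) {t : ℝ}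
    (ht : 0 ≤ t) (ht' : t < 1 / 2) :
    (gaussianMatrix n m).real {A | c * ‖x‖ ^ 2 ≤ ‖Matrix.toEuclideanLin (.of A) x‖ ^ 2} ≤
      exp (-t * c) * (√(1 - 2 * t))⁻¹ ^ n := by
  have t_eq : t / ‖x‖ ^ 2 * ‖x‖ ^ 2 = t := div_mul_cancel₀ t (by simpa using hx)
  have hmgf : 2 * (t / ‖x‖ ^ 2) * ‖x‖ ^ 2 < 1 := by linarith
  have chernoff := measure_ge_le_exp_mul_mgf (c * ‖x‖ ^ 2) (div_nonneg ht (sq_nonneg ‖x‖))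
    (integrable_exp_norm_sq_gaussianMatrix (n := n) x hmgf)
  have exponent_eq : -(t / ‖x‖ ^ 2) * (c * ‖x‖ ^ 2) = -t * c := by linear_combination -c * t_eq
  rwa [mgf_norm_sq_gaussianMatrix x hmgf, mul_assoc 2, t_eq, exponent_eq] at chernoff

lemma gaussianMatrix_real_norm_lt_le (x : EuclideanSpace ℝ (Fin m)) :
    (gaussianMatrix n m).real {A | ‖Matrix.toEuclideanLin (.of A) x‖ < √n / 7 * ‖x‖} ≤
      exp (-n) := by
  rcases eq_or_ne x 0 with rfl | hx
  · simp [exp_nonneg]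
  have hsub : {A : Fin n → Fin m → ℝ | ‖Matrix.toEuclideanLin (.of A) x‖ < √n / 7 * ‖x‖} ⊆
      {A | ‖Matrix.toEuclideanLin (.of A) x‖ ^ 2 ≤ n / 49 * ‖x‖ ^ 2} := fun A hA => by
    calc ‖Matrix.toEuclideanLin (.of A) x‖ ^ 2 ≤ (√n / 7 * ‖x‖) ^ 2 := by gcongr; exact hA.le
      _ = n / 49 * ‖x‖ ^ 2 := by rw [mul_pow, div_pow, sq_sqrt n.cast_nonneg]; norm_num
  have sqrt_inv_le : (√(1 - 2 * (-40)))⁻¹ ≤ exp (-2) := by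
    have exp_two_le : exp 2 ≤ 9 := by
      rw [← one_add_one_eq_two, exp_add]
      nlinarith [exp_one_lt_three, exp_pos 1]
    rw [exp_neg, show (1 - 2 * -40 : ℝ) = 9 ^ 2 by norm_num, sqrt_sq (by norm_num)]
    gcongr
  calc _ ≤ _ := measureReal_mono hsub
    _ ≤ exp (-(-40) * (n / 49)) * (√(1 - 2 * (-40)))⁻¹ ^ n :=
      gaussianMatrix_real_norm_sq_le_le hx _ (by norm_num)
    _ ≤ exp (-(-40) * (n / 49)) * exp (-2) ^ n := by gcongr
    _ = exp (-(58 / 49) * n) := by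
      rw [← exp_nat_mul, ← exp_add]
      ring_nf
    _ ≤ exp (-n) := by
      gcongr
      linarith [n.cast_nonneg (α := ℝ)]

lemma gaussianMatrix_real_lt_norm_le (x : EuclideanSpace ℝ (Fin m)) :
    (gaussianMatrix n m).real {A | 4 * √n * ‖x‖ < ‖Matrix.toEuclideanLin (.of A) x‖} ≤
      exp (-n) := by
  rcases eq_or_ne x 0 with rfl | hx
  · simp [exp_nonneg]
  have hsub : {A : Fin n → Fin m → ℝ | 4 * √n * ‖x‖ < ‖Matrix.toEuclideanLin (.of A) x‖} ⊆
      {A | 16 * n * ‖x‖ ^ 2 ≤ ‖Matrix.toEuclideanLin (.of A) x‖ ^ 2} := fun A hA => by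
    calc 16 * n * ‖x‖ ^ 2 = (4 * √n * ‖x‖) ^ 2 := by
          rw [mul_pow, mul_pow, sq_sqrt n.cast_nonneg]; norm_num
      _ ≤ ‖Matrix.toEuclideanLin (.of A) x‖ ^ 2 := by gcongr; exact hA.le
  have sqrt_inv_le : (√(1 - 2 * (1 / 4)))⁻¹ ≤ exp 1 := by
    calc (√(1 - 2 * (1 / 4)))⁻¹ ≤ (1 / 2 : ℝ)⁻¹ := by
          gcongr
          exact le_sqrt_of_sq_le (by norm_num)
      _ ≤ exp 1 := by linarith [add_one_le_exp 1]
  calc _ ≤ _ := measureReal_mono hsub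
    _ ≤ exp (-(1 / 4) * (16 * n)) * (√(1 - 2 * (1 / 4)))⁻¹ ^ n :=
      gaussianMatrix_real_le_norm_sq_le hx _ (by norm_num) (by norm_num)
    _ ≤ exp (-(1 / 4) * (16 * n)) * exp 1 ^ n := by gcongr
    _ = exp (-3 * n) := by
      rw [← exp_nat_mul, ← exp_add]
      ring_nf
    _ ≤ exp (-n) := by
      gcongr
      linarith [n.cast_nonneg (α := ℝ)]

end GaussianConcentration

section RestrictedIsometry

variable {ι V : Type*} [Fintype ι] [NormedAddCommGroup V] [NormedSpace ℝ V]
  {F : EuclideanSpace ℝ ι →ₗ[ℝ] V} {k M : ℕ} {a a' b b' α β ε : ℝ} {u : EuclideanSpace ℝ ι}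

/-- The restricted isometry property: `F` distorts the norm of every vector with at most `k`
nonzero entries by a factor between `a` and `b`. -/
def HasRestrictedIsometry (F : EuclideanSpace ℝ ι →ₗ[ℝ] V) (k : ℕ) (a b : ℝ) : Prop :=
  ∀ u : EuclideanSpace ℝ ι, hammingNorm (ofLp u) ≤ k → a * ‖u‖ ≤ ‖F u‖ ∧ ‖F u‖ ≤ b * ‖u‖

/-- An integer vector, viewed in Euclidean space. Multiples of integer vectors of small `ℓ₁`-norm
serve as a net for the sparse vectors. -/
def intVec (z : ι → ℤ) : EuclideanSpace ℝ ι := toLp 2 fun j => (z j : ℝ)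

lemma HasRestrictedIsometry.mono (hF : HasRestrictedIsometry F k a b) (ha : a' ≤ a)
    (hb : b ≤ b') : HasRestrictedIsometry F k a' b' := fun u hu =>
  ⟨by grw [ha]; exact (hF u hu).1, by grw [← hb]; exact (hF u hu).2⟩

lemma norm_le_sqrt_mul_of_hammingNorm_le (hu : hammingNorm (ofLp u) ≤ k) {B : ℝ} (hB : 0 ≤ B)
    (entry_le : ∀ j, |u j| ≤ B) : ‖u‖ ≤ √k * B := by
  refine le_of_sq_le_sq ?_ (by positivity)
  calc ‖u‖ ^ 2 = ∑ j with u j ≠ 0, u j ^ 2 := by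
        rw [EuclideanSpace.real_norm_sq_eq, Finset.sum_filter_of_ne]
        exact fun j _ => by simp
    _ ≤ hammingNorm (ofLp u) • B ^ 2 :=
        Finset.sum_le_card_nsmul _ _ _ fun j _ => sq_le_sq' (abs_le.mp (entry_le j)).1
          (abs_le.mp (entry_le j)).2
    _ ≤ (√k * B) ^ 2 := by
        rw [nsmul_eq_mul, mul_pow, sq_sqrt k.cast_nonneg]
        gcongr

lemma exists_int_abs_sub_le_one_abs_le (t : ℝ) : ∃ z : ℤ, |t - z| ≤ 1 ∧ |(z : ℝ)| ≤ |t| := by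
  rcases le_total 0 t with ht | ht
  · have floor_nonneg : (0 : ℝ) ≤ ⌊t⌋ := mod_cast Int.floor_nonneg.mpr ht
    refine ⟨⌊t⌋, abs_le.mpr ⟨?_, ?_⟩, abs_le_abs_of_nonneg floor_nonneg (Int.floor_le t)⟩
    all_goals linarith [Int.floor_le t, Int.lt_floor_add_one t]
  · have ceil_nonpos : (⌈t⌉ : ℝ) ≤ 0 := mod_cast Int.ceil_le.mpr (by simpa using ht)
    refine ⟨⌈t⌉, abs_le.mpr ⟨?_, ?_⟩, abs_le_abs_of_nonpos ceil_nonpos (Int.le_ceil t)⟩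
    all_goals linarith [Int.le_ceil t, Int.ceil_lt_add_one t]

lemma exists_int_abs_sub_mul_le {h : ℝ} (hh : 0 < h) (t : ℝ) :
    ∃ z : ℤ, |t - h * z| ≤ h ∧ |h * z| ≤ |t| := by
  obtain ⟨z, abs_sub_le, abs_le⟩ := exists_int_abs_sub_le_one_abs_le (t / h)
  have abs_h_mul (r : ℝ) : |h * r| = h * |r| := by rw [abs_mul, abs_of_pos hh]
  refine ⟨z, ?_, ?_⟩
  · rw [← mul_div_cancel₀ t hh.ne', ← mul_sub, abs_h_mul]
    exact mul_le_of_le_one_right hh.le abs_sub_le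
  · rw [abs_div, abs_of_pos hh, le_div_iff₀' hh] at abs_le
    rwa [abs_h_mul]

lemma natAbs_le_sq_div {h t : ℝ} {z : ℤ} (hh : 0 < h) (hz : |h * z| ≤ |t|) :
    (z.natAbs : ℝ) ≤ t ^ 2 / h ^ 2 := by
  have natAbs_le_sq : (z.natAbs : ℝ) ≤ (z : ℝ) ^ 2 := by
    rw [Nat.cast_natAbs]
    exact_mod_cast Int.natAbs_le_self_sq z
  rw [le_div_iff₀' (by positivity)]
  calc h ^ 2 * z.natAbs ≤ h ^ 2 * (z : ℝ) ^ 2 := by gcongr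
    _ = (h * z) ^ 2 := by ring
    _ ≤ t ^ 2 := sq_le_sq.mpr hz

lemma exists_intVec_near (hε : 0 < ε) (hu : hammingNorm (ofLp u) ≤ k) :
    ∃ (z : ι → ℤ) (h : ℝ), ((∑ j, (z j).natAbs : ℕ) : ℝ) ≤ k / ε ^ 2 ∧
      hammingNorm (ofLp (u - h • intVec z)) ≤ k ∧
      ‖u - h • intVec z‖ ≤ ε * ‖u‖ ∧ ‖h • intVec z‖ ≤ ‖u‖ := by
  rcases eq_or_ne u 0 with rfl | hu0
  · exact ⟨0, 0, by simpa using (by positivity : 0 ≤ k / ε ^ 2), by simp, by simp, by simp⟩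
  have k_pos : 0 < k := (hammingNorm_pos_iff.mpr (by simpa using hu0)).trans_le hu
  set h : ℝ := ε * ‖u‖ / √k with h_def
  have h_pos : 0 < h := by positivity
  choose z abs_sub_le abs_hz_le using fun j => exists_int_abs_sub_mul_le h_pos (u j)
  have sparse : hammingNorm (ofLp (u - h • intVec z)) ≤ k := by
    refine (Finset.card_le_card <| Finset.monotone_filter_right _ fun j _ hj hu_j => hj ?_).trans hu
    have hz_j : h * z j = 0 := abs_nonpos_iff.mp (by simpa only [hu_j, abs_zero] using abs_hz_le j)
    simp [intVec, hu_j, hz_j]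
  refine ⟨z, h, ?_, sparse, ?_, ?_⟩
  · calc ((∑ j, (z j).natAbs : ℕ) : ℝ) ≤ ∑ j, u j ^ 2 / h ^ 2 := by
          push_cast
          exact Finset.sum_le_sum fun j _ => natAbs_le_sq_div h_pos (abs_hz_le j)
      _ = ‖u‖ ^ 2 / h ^ 2 := by rw [EuclideanSpace.real_norm_sq_eq, Finset.sum_div]
      _ = k / ε ^ 2 := by
          rw [h_def, div_pow, mul_pow, sq_sqrt k.cast_nonneg]
          field_simp
  · calc ‖u - h • intVec z‖ ≤ √k * h :=
          norm_le_sqrt_mul_of_hammingNorm_le sparse h_pos.le abs_sub_le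
      _ = ε * ‖u‖ := by rw [h_def]; field_simp
  · refine le_of_sq_le_sq ?_ (norm_nonneg u)
    rw [EuclideanSpace.real_norm_sq_eq, EuclideanSpace.real_norm_sq_eq]
    exact Finset.sum_le_sum fun j _ => sq_le_sq.mpr (abs_hz_le j)

lemma norm_map_le_of_net (hε0 : 0 < ε) (hε1 : ε < 1) (hβ : 0 ≤ β) (hM : k / ε ^ 2 ≤ M)
    (hnet : ∀ z : ι → ℤ, ∑ j, (z j).natAbs ≤ M → ‖F (intVec z)‖ ≤ β * ‖intVec z‖)
    (hu : hammingNorm (ofLp u) ≤ k) : ‖F u‖ ≤ β / (1 - ε) * ‖u‖ := by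
  have one_sub_pos : 0 < 1 - ε := by linarith
  set c : ℕ → ℝ := fun N => β / (1 - ε) + ε ^ N * ‖F.toContinuousLinearMap‖
  have iterate (N : ℕ) : ∀ v : EuclideanSpace ℝ ι, hammingNorm (ofLp v) ≤ k →
      ‖F v‖ ≤ c N * ‖v‖ := by
    induction N with
    | zero =>
      intro v _
      calc ‖F v‖ ≤ ‖F.toContinuousLinearMap‖ * ‖v‖ := F.toContinuousLinearMap.le_opNorm v
        _ ≤ c 0 * ‖v‖ := by
          gcongr
          simp only [c, pow_zero, one_mul]
          exact le_add_of_nonneg_left (by positivity)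
    | succ N ih =>
      intro v hv
      obtain ⟨z, h, hz, rest_sparse, rest_le, norm_hz_le⟩ := exists_intVec_near hε0 hv
      calc ‖F v‖ = ‖h • F (intVec z) + F (v - h • intVec z)‖ := by simp
        _ ≤ ‖h‖ * ‖F (intVec z)‖ + ‖F (v - h • intVec z)‖ := by
          rw [← norm_smul]; exact norm_add_le _ _
        _ ≤ ‖h‖ * (β * ‖intVec z‖) + c N * ‖v - h • intVec z‖ := by
          gcongr
          · exact hnet z (mod_cast hz.trans hM)
          · exact ih _ rest_sparse
        _ = β * ‖h • intVec z‖ + c N * ‖v - h • intVec z‖ := by rw [norm_smul]; ring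
        _ ≤ β * ‖v‖ + c N * (ε * ‖v‖) := by gcongr
        _ = c (N + 1) * ‖v‖ := by simp only [c]; field_simp; ring
  have c_tendsto : Filter.Tendsto c .atTop (nhds (β / (1 - ε))) := by
    simpa [c] using ((tendsto_pow_atTop_nhds_zero_of_lt_one hε0.le hε1).mul_const
      ‖F.toContinuousLinearMap‖).const_add (β / (1 - ε))
  exact ge_of_tendsto' (c_tendsto.mul_const ‖u‖) fun N => iterate N u hu

lemma le_norm_map_of_net (hε0 : 0 < ε) (hε1 : ε < 1) (hα : 0 ≤ α) (hβ : 0 ≤ β)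
    (hM : k / ε ^ 2 ≤ M)
    (hnet : ∀ z : ι → ℤ, ∑ j, (z j).natAbs ≤ M →
      α * ‖intVec z‖ ≤ ‖F (intVec z)‖ ∧ ‖F (intVec z)‖ ≤ β * ‖intVec z‖)
    (hu : hammingNorm (ofLp u) ≤ k) :
    (α * (1 - ε) - ε * (β / (1 - ε))) * ‖u‖ ≤ ‖F u‖ := by
  have : 0 < 1 - ε := by linarith
  obtain ⟨z, h, hz, rest_sparse, rest_le, -⟩ := exists_intVec_near hε0 hu
  have norm_le : (1 - ε) * ‖u‖ ≤ ‖h • intVec z‖ := by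
    linarith [norm_le_norm_add_norm_sub' u (h • intVec z)]
  have rest_map_le : ‖F (u - h • intVec z)‖ ≤ β / (1 - ε) * (ε * ‖u‖) :=
    (norm_map_le_of_net hε0 hε1 hβ hM (fun z hz => (hnet z hz).2) rest_sparse).trans (by gcongr)
  have net_part_le : α * ‖h • intVec z‖ ≤ ‖F (h • intVec z)‖ := by
    have := mul_le_mul_of_nonneg_left (hnet z (mod_cast hz.trans hM)).1 (norm_nonneg h)
    rw [map_smul, norm_smul, norm_smul]
    linarith
  have triangle : ‖F (h • intVec z)‖ ≤ ‖F u‖ + ‖F (u - h • intVec z)‖ := by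
    rw [map_sub]
    exact norm_le_norm_add_norm_sub _ _
  linarith [mul_le_mul_of_nonneg_left norm_le hα]

lemma hasRestrictedIsometry_of_net (hε0 : 0 < ε) (hε1 : ε < 1) (hα : 0 ≤ α) (hβ : 0 ≤ β)
    (hM : k / ε ^ 2 ≤ M)
    (hnet : ∀ z : ι → ℤ, ∑ j, (z j).natAbs ≤ M →
      α * ‖intVec z‖ ≤ ‖F (intVec z)‖ ∧ ‖F (intVec z)‖ ≤ β * ‖intVec z‖) :
    HasRestrictedIsometry F k (α * (1 - ε) - ε * (β / (1 - ε))) (β / (1 - ε)) := fun _ hu =>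
  ⟨le_norm_map_of_net hε0 hε1 hα hβ hM hnet hu,
    norm_map_le_of_net hε0 hε1 hβ hM (fun z hz => (hnet z hz).2) hu⟩

end RestrictedIsometry

section NetCardinality

variable {m n M : ℕ} {t : ℝ}

/-- The integer points of the `ℓ₁`-ball of radius `M` in `ℝ^m`. The entries are first confined to
`[-M, M]`, which loses nothing and makes the set visibly finite. -/
noncomputable def intL1Ball (m M : ℕ) : Finset (Fin m → ℤ) :=
  {z ∈ Fintype.piFinset fun _ => Finset.Icc (-(M : ℤ)) M | ∑ j, (z j).natAbs ≤ M}

lemma mem_intL1Ball {z : Fin m → ℤ} : z ∈ intL1Ball m M ↔ ∑ j, (z j).natAbs ≤ M := by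
  refine ⟨fun hz => (Finset.mem_filter.mp hz).2, fun hz => Finset.mem_filter.mpr ⟨?_, hz⟩⟩
  refine Fintype.mem_piFinset.mpr fun j => ?_
  have := (Finset.single_le_sum (f := fun j => (z j).natAbs) (fun _ _ => zero_le)
    (Finset.mem_univ j)).trans hz
  rw [Finset.mem_Icc]
  omega

lemma sum_Icc_neg_pow_natAbs_le (ht0 : 0 ≤ t) (ht : t ≤ 1 / 2) (M : ℕ) :
    ∑ a ∈ Finset.Icc (-(M : ℤ)) M, t ^ a.natAbs ≤ 1 + 4 * t := by
  suffices ∑ a ∈ Finset.Icc (-(M : ℤ)) M, t ^ a.natAbs + 4 * t ^ (M + 1) ≤ 1 + 4 * t from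
    (le_add_of_nonneg_right (by positivity)).trans this
  induction M with
  | zero => simp
  | succ M ih =>
    have Icc_succ : Finset.Icc (-((M + 1 : ℕ) : ℤ)) (M + 1 : ℕ) =
        insert ((M + 1 : ℕ) : ℤ) (insert (-((M + 1 : ℕ) : ℤ)) (Finset.Icc (-(M : ℤ)) M)) := by
      ext a
      simp only [Finset.mem_Icc, Finset.mem_insert]
      omega
    have pow_succ_le : t ^ (M + 1 + 1) ≤ t ^ (M + 1) * (1 / 2) := by
      rw [pow_succ]
      gcongr
    rw [Icc_succ, Finset.sum_insert (by simp only [Finset.mem_insert, Finset.mem_Icc]; omega),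
      Finset.sum_insert (by simp), Int.natAbs_neg, Int.natAbs_natCast]
    linarith

lemma card_intL1Ball_mul_pow_le (m M : ℕ) (ht0 : 0 ≤ t) (ht : t ≤ 1 / 2) :
    (intL1Ball m M).card * t ^ M ≤ exp (4 * t * m) := by
  calc (intL1Ball m M).card * t ^ M ≤ ∑ z ∈ intL1Ball m M, ∏ j, t ^ (z j).natAbs := by
        rw [← nsmul_eq_mul]
        refine Finset.card_nsmul_le_sum _ _ _ fun z hz => ?_
        rw [Finset.prod_pow_eq_pow_sum]
        exact pow_le_pow_of_le_one ht0 (by linarith) (mem_intL1Ball.mp hz)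
    _ ≤ ∑ z ∈ Fintype.piFinset fun _ : Fin m => Finset.Icc (-(M : ℤ)) M,
          ∏ j, t ^ (z j).natAbs :=
        Finset.sum_le_sum_of_subset_of_nonneg (Finset.filter_subset _ _) fun _ _ _ => by
          positivity
    _ = ∏ _j : Fin m, ∑ a ∈ Finset.Icc (-(M : ℤ)) M, t ^ a.natAbs := by
        rw [Finset.prod_univ_sum]
    _ ≤ ∏ _j : Fin m, exp (4 * t) := by
        gcongr
        linarith [sum_Icc_neg_pow_natAbs_le ht0 ht M, add_one_le_exp (4 * t)]
    _ = exp (4 * t * m) := by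
        rw [Fin.prod_const, ← exp_nat_mul, mul_comm]

lemma one_le_log_exp_one_mul_div (hn : 1 ≤ n) (hnm : n ≤ m) :
    1 ≤ log (exp 1 * m / n) := by
  have n_pos : (0 : ℝ) < n := by positivity
  have m_pos : (0 : ℝ) < m := by exact_mod_cast hn.trans hnm
  rw [le_log_iff_exp_le (by positivity), le_div_iff₀ n_pos]
  gcongr

lemma exp_neg_four_mul_le {L : ℝ} (hL : 1 ≤ L) : exp (-(4 * L)) ≤ exp (-L) / 8 := by
  have eight_le : 8 ≤ exp (3 * L) := by
    calc (8 : ℝ) = 2 ^ 3 := by norm_num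
      _ ≤ exp 1 ^ 3 := by
        gcongr
        linarith [add_one_le_exp 1]
      _ ≤ exp (3 * L) := by
        rw [← exp_nat_mul]
        gcongr
        norm_num
  rw [le_div_iff₀ (by norm_num)]
  calc exp (-(4 * L)) * 8 ≤ exp (-(4 * L)) * exp (3 * L) := by gcongr
    _ = exp (-L) := by rw [← exp_add]; ring_nf

-- The weight `t = n / (8 e m)` balances `t ^ M` against `exp (4 * t * m)`.
lemma card_intL1Ball_le_exp (hn : 1 ≤ n) (hnm : n ≤ m)
    (hM : M * (16 * log (exp 1 * m / n)) ≤ n) :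
    ((intL1Ball m M).card : ℝ) ≤ exp (n / 2) := by
  have m_pos : (0 : ℝ) < m := by exact_mod_cast hn.trans hnm
  have one_le_log := one_le_log_exp_one_mul_div hn hnm
  set L := log (exp 1 * m / n)
  have exp_neg_L : exp (-L) = n / (exp 1 * m) := by
    rw [exp_neg, exp_log (by positivity), inv_div]
  have two_le_exp_one : 2 ≤ exp 1 := by linarith [add_one_le_exp 1]
  have card_le := card_intL1Ball_mul_pow_le m M (t := exp (-L) / 8) (by positivity)
    (by linarith [exp_le_one_iff.mpr (by linarith : -L ≤ 0)])
  have four_t_m_le : 4 * (exp (-L) / 8) * m ≤ n / 4 := by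
    rw [exp_neg_L, show 4 * (n / (exp 1 * m) / 8) * m = n / (2 * exp 1) by field_simp; norm_num]
    gcongr
    linarith
  have le_pow : exp (-(n / 4)) ≤ (exp (-L) / 8) ^ M := by
    calc exp (-(n / 4)) ≤ exp (-(4 * L)) ^ M := by
          rw [← exp_nat_mul]
          gcongr
          linarith
      _ ≤ (exp (-L) / 8) ^ M := by
          gcongr
          exact exp_neg_four_mul_le one_le_log
  have : (intL1Ball m M).card * exp (-(n / 4)) ≤ exp (n / 4) := by
    grw [le_pow, card_le, four_t_m_le]
  rw [exp_neg, ← div_eq_mul_inv, div_le_iff₀ (exp_pos _), ← exp_add] at this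
  rwa [show (n : ℝ) / 2 = n / 4 + n / 4 by ring]

end NetCardinality

section GaussianRestrictedIsometry

variable {m n k : ℕ}

lemma gaussianMatrix_real_not_norm_bounds_le (x : EuclideanSpace ℝ (Fin m)) :
    (gaussianMatrix n m).real {A | ¬ (√n / 7 * ‖x‖ ≤ ‖Matrix.toEuclideanLin (.of A) x‖ ∧
      ‖Matrix.toEuclideanLin (.of A) x‖ ≤ 4 * √n * ‖x‖)} ≤ 2 * exp (-n) := by
  simp_rw [not_and_or, not_le, two_mul]
  exact (measureReal_union_le _ _).trans
    (add_le_add (gaussianMatrix_real_norm_lt_le x) (gaussianMatrix_real_lt_norm_le x))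

lemma hasRestrictedIsometry_of_intL1Ball {V : Type*} [NormedAddCommGroup V] [NormedSpace ℝ V]
    {F : EuclideanSpace ℝ (Fin m) →ₗ[ℝ] V} {R : ℝ} (hR : 0 ≤ R)
    (hnet : ∀ z ∈ intL1Ball m (10000 * k),
      R / 7 * ‖intVec z‖ ≤ ‖F (intVec z)‖ ∧ ‖F (intVec z)‖ ≤ 4 * R * ‖intVec z‖) :
    HasRestrictedIsometry F k (R / 10) (5 * R) := by
  refine (hasRestrictedIsometry_of_net (ε := 1 / 100) (M := 10000 * k) (by norm_num)
    (by norm_num) (by positivity) (by positivity) ?_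
    fun z hz => hnet z (mem_intL1Ball.mpr hz)).mono ?_ ?_
  · exact le_of_eq (by push_cast; ring)
  all_goals norm_num; linarith

lemma gaussianMatrix_real_not_hasRestrictedIsometry_le (hn : 1 ≤ n) (hnm : n ≤ m)
    (hk : k * (160000 * log (exp 1 * m / n)) ≤ n) :
    (gaussianMatrix n m).real {A |
      ¬ HasRestrictedIsometry (Matrix.toEuclideanLin (.of A)) k (√n / 10) (5 * √n)} ≤
        2 * exp (-(n / 2)) := by
  set bad : (Fin m → ℤ) → Set (Fin n → Fin m → ℝ) := fun z => {A |
    ¬ (√n / 7 * ‖intVec z‖ ≤ ‖Matrix.toEuclideanLin (.of A) (intVec z)‖ ∧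
      ‖Matrix.toEuclideanLin (.of A) (intVec z)‖ ≤ 4 * √n * ‖intVec z‖)}
  have subset_iUnion_bad : {A : Fin n → Fin m → ℝ |
      ¬ HasRestrictedIsometry (Matrix.toEuclideanLin (.of A)) k (√n / 10) (5 * √n)} ⊆
        ⋃ z ∈ intL1Ball m (10000 * k), bad z := fun A not_isometry => by
    by_contra not_bad
    simp only [Set.mem_iUnion, not_exists, bad, Set.mem_ofPred_eq, not_not] at not_bad
    exact not_isometry (hasRestrictedIsometry_of_intL1Ball (sqrt_nonneg n) not_bad)
  calc _ ≤ (gaussianMatrix n m).real (⋃ z ∈ intL1Ball m (10000 * k), bad z) :=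
        measureReal_mono subset_iUnion_bad (measure_ne_top _ _)
    _ ≤ ∑ z ∈ intL1Ball m (10000 * k), (gaussianMatrix n m).real (bad z) :=
        measureReal_biUnion_finset_le _ _
    _ ≤ (intL1Ball m (10000 * k)).card • (2 * exp (-n)) :=
        Finset.sum_le_card_nsmul _ _ _ fun z _ => gaussianMatrix_real_not_norm_bounds_le _
    _ ≤ exp (n / 2) * (2 * exp (-n)) := by
        rw [nsmul_eq_mul]
        gcongr
        refine card_intL1Ball_le_exp hn hnm ?_
        push_cast
        linarith
    _ = 2 * exp (-(n / 2)) := by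
        rw [mul_left_comm, ← exp_add]
        ring_nf

end GaussianRestrictedIsometry

section LpLevel

variable {ι : Type*} {y : ι → ℝ} {S T U : Finset ι} {s : ℕ} {p q H : ℝ}

lemma exists_subset_card_eq_forall_le [DecidableEq ι] {α : Type*} [LinearOrder α] (f : ι → α)
    (hs : s ≤ U.card) : ∃ T ⊆ U, T.card = s ∧ ∀ i ∈ T, ∀ j ∈ U \ T, f j ≤ f i := by
  induction s with
  | zero => exact ⟨∅, by simp, by simp, by simp⟩
  | succ s ih =>
    obtain ⟨T, hTU, hT, T_top⟩ := ih (by omega)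
    have sdiff_nonempty : (U \ T).Nonempty := by
      rw [← Finset.card_pos, Finset.card_sdiff_of_subset hTU]
      omega
    obtain ⟨i₀, hi₀, i₀_max⟩ := Finset.exists_max_image (U \ T) f sdiff_nonempty
    obtain ⟨hi₀U, hi₀T⟩ := Finset.mem_sdiff.mp hi₀
    refine ⟨insert i₀ T, Finset.insert_subset hi₀U hTU, by simp [hi₀T, hT], fun i hi j hj => ?_⟩
    have hj' : j ∈ U \ T := Finset.sdiff_subset_sdiff subset_rfl (Finset.subset_insert _ _) hj
    rcases Finset.mem_insert.mp hi with rfl | hi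
    · exact i₀_max j hj'
    · exact T_top i hi j hj'

/-- The height of a block of `s` equal entries whose `p`-th power sum is that of `y` on `U`. For
`p ≤ 1` it is superadditive in `U`, which makes the block decomposition of a vector summable. -/
noncomputable def lpLevel (p : ℝ) (s : ℕ) (y : ι → ℝ) (U : Finset ι) : ℝ :=
  ((∑ j ∈ U, |y j| ^ p) / s) ^ (1 / p)

lemma lpLevel_nonneg (p : ℝ) (s : ℕ) (y : ι → ℝ) (U : Finset ι) : 0 ≤ lpLevel p s y U := by
  unfold lpLevel
  positivity

lemma lpLevel_mono (hp : 0 ≤ p) (hTU : T ⊆ U) : lpLevel p s y T ≤ lpLevel p s y U := by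
  unfold lpLevel
  gcongr

lemma lpLevel_add_lpLevel_sdiff_le [DecidableEq ι] (hp : 0 < p) (hp1 : p ≤ 1) (hTU : T ⊆ U) :
    lpLevel p s y T + lpLevel p s y (U \ T) ≤ lpLevel p s y U := by
  unfold lpLevel
  rw [← Finset.sum_sdiff hTU, add_comm (∑ j ∈ U \ T, |y j| ^ p), add_div]
  exact add_rpow_le_rpow_add (by positivity) (by positivity) (by rwa [le_div_iff₀ hp, one_mul])

lemma lpLevel_le (hp : 0 < p) (hH : 0 ≤ H) (hU : ∑ j ∈ U, |y j| ^ p ≤ s * H ^ p) :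
    lpLevel p s y U ≤ H := by
  calc lpLevel p s y U ≤ (H ^ p) ^ (1 / p) := by
        unfold lpLevel
        gcongr
        exact div_le_of_le_mul₀ s.cast_nonneg (by positivity) (by rwa [mul_comm])
    _ = H := by rw [one_div, rpow_rpow_inv hH hp.ne']

lemma abs_le_lpLevel (hp : 0 < p) (hT : T.Nonempty) {j : ι} (hj : ∀ i ∈ T, |y j| ≤ |y i|) :
    |y j| ≤ lpLevel p T.card y T := by
  have card_pos : (0 : ℝ) < T.card := by exact_mod_cast hT.card_pos
  calc |y j| = (|y j| ^ p) ^ (1 / p) := by rw [one_div, rpow_rpow_inv (abs_nonneg _) hp.ne']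
    _ ≤ lpLevel p T.card y T := by
        unfold lpLevel
        gcongr
        rw [le_div_iff₀' card_pos, ← nsmul_eq_mul]
        exact Finset.card_nsmul_le_sum _ _ _ fun i hi =>
          rpow_le_rpow (abs_nonneg _) (hj i hi) hp.le

lemma rpow_le_rpow_add_rpow_sub_two_mul_sq {t : ℝ} (ht : 0 ≤ t) (hH : 0 < H) (hq0 : 0 ≤ q)
    (hq2 : q ≤ 2) : t ^ q ≤ H ^ q + H ^ (q - 2) * t ^ 2 := by
  rcases le_total t H with htH | hHt
  · calc t ^ q ≤ H ^ q := by gcongr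
      _ ≤ H ^ q + H ^ (q - 2) * t ^ 2 := le_add_of_nonneg_right (by positivity)
  · have t_pos : 0 < t := hH.trans_le hHt
    calc t ^ q = t ^ (q - 2) * t ^ 2 := by rw [← rpow_natCast, ← rpow_add t_pos]; norm_num
      _ ≤ H ^ (q - 2) * t ^ 2 := mul_le_mul_of_nonneg_right
          (rpow_le_rpow_of_nonpos hH hHt (sub_nonpos.mpr hq2)) (sq_nonneg t)
      _ ≤ H ^ q + H ^ (q - 2) * t ^ 2 := le_add_of_nonneg_left (by positivity)

lemma sum_abs_rpow_le_of_sum_sq_le (hH : 0 < H) (hq0 : 0 ≤ q) (hq2 : q ≤ 2) {c : ℝ}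
    (hS : ∑ j ∈ S, y j ^ 2 ≤ c * H ^ 2) : ∑ j ∈ S, |y j| ^ q ≤ (S.card + c) * H ^ q := by
  calc ∑ j ∈ S, |y j| ^ q ≤ ∑ j ∈ S, (H ^ q + H ^ (q - 2) * |y j| ^ 2) :=
        Finset.sum_le_sum fun j _ =>
          rpow_le_rpow_add_rpow_sub_two_mul_sq (abs_nonneg _) hH hq0 hq2
    _ = S.card * H ^ q + H ^ (q - 2) * ∑ j ∈ S, y j ^ 2 := by
        simp [Finset.sum_add_distrib, Finset.mul_sum]
    _ ≤ S.card * H ^ q + H ^ (q - 2) * (c * H ^ 2) := by gcongr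
    _ = (S.card + c) * H ^ q := by
        rw [mul_left_comm, ← rpow_natCast, ← rpow_add hH]
        norm_num
        ring

lemma sum_abs_rpow_le_of_abs_le (hp : 0 < p) (hpq : p ≤ q) (hT : ∀ j ∈ T, |y j| ≤ H) :
    ∑ j ∈ T, |y j| ^ q ≤ H ^ (q - p) * ∑ j ∈ T, |y j| ^ p := by
  rw [Finset.mul_sum]
  gcongr with j hj
  calc |y j| ^ q = |y j| ^ (q - p) * |y j| ^ p := by
        rw [← rpow_add_of_nonneg (abs_nonneg _) (by linarith) hp.le, sub_add_cancel]
    _ ≤ H ^ (q - p) * |y j| ^ p := by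
        gcongr
        exact hT j hj

end LpLevel

section CoordRestrict

variable {ι : Type*} {T U : Finset ι}

/-- The vector that agrees with `x` on the coordinates in `T` and vanishes elsewhere. -/
noncomputable def coordRestrict (T : Finset ι) (x : EuclideanSpace ℝ ι) : EuclideanSpace ℝ ι :=
  toLp 2 ((T : Set ι).indicator (ofLp x))

lemma coordRestrict_empty (x : EuclideanSpace ℝ ι) : coordRestrict ∅ x = 0 := by
  ext
  simp [coordRestrict]

lemma coordRestrict_add_coordRestrict_sdiff [DecidableEq ι] (hTU : T ⊆ U)
    (x : EuclideanSpace ℝ ι) :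
    coordRestrict T x + coordRestrict (U \ T) x = coordRestrict U x := by
  ext j
  by_cases hjT : j ∈ T
  · simp [coordRestrict, hjT, hTU hjT]
  · simp [coordRestrict, Set.indicator_apply, hjT]

variable [Fintype ι]

lemma coordRestrict_add_coordRestrict_compl [DecidableEq ι] (T : Finset ι)
    (x : EuclideanSpace ℝ ι) : coordRestrict T x + coordRestrict Tᶜ x = x := by
  simp [coordRestrict, ← toLp_add]

lemma hammingNorm_coordRestrict_le (T : Finset ι) (x : EuclideanSpace ℝ ι) :
    hammingNorm (ofLp (coordRestrict T x)) ≤ T.card :=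
  Finset.card_le_card fun j hj => by
    simpa using (Set.indicator_apply_ne_zero.mp (Finset.mem_filter.mp hj).2).1

lemma norm_coordRestrict_sq (T : Finset ι) (x : EuclideanSpace ℝ ι) :
    ‖coordRestrict T x‖ ^ 2 = ∑ j ∈ T, x j ^ 2 := by
  classical
  simp [EuclideanSpace.real_norm_sq_eq, coordRestrict, Set.indicator_apply, ite_pow]

lemma norm_coordRestrict_le {s : ℕ} {H : ℝ} {x : EuclideanSpace ℝ ι} (hT : T.card ≤ s)
    (hH : 0 ≤ H) (entry_le : ∀ j ∈ T, |x j| ≤ H) : ‖coordRestrict T x‖ ≤ √s * H := by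
  refine norm_le_sqrt_mul_of_hammingNorm_le ((hammingNorm_coordRestrict_le T x).trans hT) hH
    fun j => ?_
  by_cases hj : j ∈ T <;> simp [coordRestrict, hj, hH, entry_le]

end CoordRestrict

section Blocks

variable {ι V : Type*} [Fintype ι] [DecidableEq ι] [NormedAddCommGroup V] [NormedSpace ℝ V]
  {F : EuclideanSpace ℝ ι →ₗ[ℝ] V} {x : EuclideanSpace ℝ ι} {U : Finset ι} {s : ℕ}
  {a b p q H : ℝ}

-- Split `U` into blocks of `s` entries in decreasing order of size: each block is bounded in sup
-- norm by the `lpLevel` of its predecessor, and these levels add up to at most that of `U`.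
lemma exists_subset_norm_map_coordRestrict_sdiff_le (hs : 1 ≤ s) (hp : 0 < p) (hp1 : p ≤ 1)
    (hb : 0 ≤ b) (hF : ∀ u : EuclideanSpace ℝ ι, hammingNorm (ofLp u) ≤ s → ‖F u‖ ≤ b * ‖u‖)
    (x : EuclideanSpace ℝ ι) (U : Finset ι) :
    ∃ T ⊆ U, T.card ≤ s ∧ (∀ j ∈ U \ T, |x j| ≤ lpLevel p s (ofLp x) U) ∧
      ‖F (coordRestrict (U \ T) x)‖ ≤ b * (√s * lpLevel p s (ofLp x) U) := by
  induction U using Finset.strongInduction with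
  | H U ih =>
    rcases le_total U.card s with hU | hU
    · have := lpLevel_nonneg p s (ofLp x) U
      refine ⟨U, subset_rfl, hU, by simp, ?_⟩
      rw [sdiff_self, Finset.bot_eq_empty, coordRestrict_empty, map_zero, norm_zero]
      positivity
    obtain ⟨T, hTU, rfl, T_top⟩ := exists_subset_card_eq_forall_le (fun j => |x j|) hU
    set level := lpLevel p T.card (ofLp x)
    have T_nonempty : T.Nonempty := Finset.card_pos.mp hs
    have abs_le : ∀ j ∈ U \ T, |x j| ≤ level T := fun j hj =>
      abs_le_lpLevel hp T_nonempty fun i hi => T_top i hi j hj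
    obtain ⟨T', hT', T'_card, -, map_rest_le⟩ := ih (U \ T) (Finset.sdiff_ssubset hTU T_nonempty)
    have map_T'_le : ‖F (coordRestrict T' x)‖ ≤ b * (√T.card * level T) := by
      grw [hF _ ((hammingNorm_coordRestrict_le T' x).trans T'_card),
        norm_coordRestrict_le T'_card (lpLevel_nonneg _ _ _ _) fun j hj => abs_le j (hT' hj)]
    refine ⟨T, hTU, le_rfl, fun j hj => (abs_le j hj).trans (lpLevel_mono hp.le hTU), ?_⟩
    calc ‖F (coordRestrict (U \ T) x)‖
        = ‖F (coordRestrict T' x) + F (coordRestrict ((U \ T) \ T') x)‖ := by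
          rw [← map_add, coordRestrict_add_coordRestrict_sdiff hT']
      _ ≤ b * (√T.card * level T) + b * (√T.card * level (U \ T)) :=
          (norm_add_le _ _).trans (add_le_add map_T'_le map_rest_le)
      _ = b * (√T.card * (level T + level (U \ T))) := by ring
      _ ≤ b * (√T.card * level U) := by
          gcongr
          exact lpLevel_add_lpLevel_sdiff_le hp hp1 hTU

lemma HasRestrictedIsometry.exists_norm_coordRestrict_le (hF : HasRestrictedIsometry F (2 * s) a b)
    (ha : 0 < a) (hb : 0 ≤ b) (hs : 1 ≤ s) (hp : 0 < p) (hp1 : p ≤ 1) (hker : F x = 0)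
    (hU : Uᶜ.card ≤ s) (level_le : lpLevel p s (ofLp x) U ≤ H) :
    ∃ S : Finset ι, S.card ≤ 2 * s ∧ Sᶜ ⊆ U ∧ ‖coordRestrict S x‖ ≤ b / a * (√s * H) ∧
      ∀ j ∈ Sᶜ, |x j| ≤ H := by
  obtain ⟨T, -, hT, abs_le, map_le⟩ := exists_subset_norm_map_coordRestrict_sdiff_le hs hp hp1
    hb (fun u hu => (hF u (by omega)).2) x U
  have compl_eq : (Uᶜ ∪ T)ᶜ = U \ T := by
    rw [Finset.compl_union, compl_compl, Finset.sdiff_eq_inter_compl]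
  have card_le : (Uᶜ ∪ T).card ≤ 2 * s := by
    linarith [Finset.card_union_le Uᶜ T]
  have map_eq : F (coordRestrict (Uᶜ ∪ T) x) = -F (coordRestrict (U \ T) x) := by
    rw [eq_neg_iff_add_eq_zero, ← map_add, ← compl_eq, coordRestrict_add_coordRestrict_compl, hker]
  refine ⟨Uᶜ ∪ T, card_le, compl_eq ▸ Finset.sdiff_subset, ?_, fun j hj =>
    (abs_le j (compl_eq ▸ hj)).trans level_le⟩
  have := calc a * ‖coordRestrict (Uᶜ ∪ T) x‖ ≤ ‖F (coordRestrict (Uᶜ ∪ T) x)‖ :=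
        (hF _ ((hammingNorm_coordRestrict_le _ x).trans card_le)).1
    _ = ‖F (coordRestrict (U \ T) x)‖ := by rw [map_eq, norm_neg]
    _ ≤ b * (√s * lpLevel p s (ofLp x) U) := map_le
    _ ≤ b * (√s * H) := by gcongr
  rwa [div_mul_eq_mul_div, le_div_iff₀' ha]

lemma HasRestrictedIsometry.sum_abs_rpow_le (hF : HasRestrictedIsometry F (2 * s) a b)
    (ha : 0 < a) (hb : 0 ≤ b) (hs : 1 ≤ s) (hp : 0 < p) (hp1 : p ≤ 1) (hpq : p ≤ q) (hq : q ≤ 2)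
    (hker : F x = 0) (hU : Uᶜ.card ≤ s) (hH : 0 < H) (hx : ∑ j ∈ U, |x j| ^ p ≤ s * H ^ p) :
    ∑ j, |x j| ^ q ≤ (3 + (b / a) ^ 2) * (s * H ^ q) := by
  obtain ⟨S, hS, hSU, norm_le, abs_le⟩ :=
    hF.exists_norm_coordRestrict_le ha hb hs hp hp1 hker hU (lpLevel_le hp hH.le hx)
  have head_sq_le : ∑ j ∈ S, x j ^ 2 ≤ (b / a) ^ 2 * s * H ^ 2 := by
    calc ∑ j ∈ S, x j ^ 2 = ‖coordRestrict S x‖ ^ 2 := (norm_coordRestrict_sq S x).symm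
      _ ≤ (b / a * (√s * H)) ^ 2 := by gcongr
      _ = (b / a) ^ 2 * s * H ^ 2 := by rw [mul_pow, mul_pow, sq_sqrt s.cast_nonneg]; ring
  have head_le : ∑ j ∈ S, |x j| ^ q ≤ (2 * s + (b / a) ^ 2 * s) * H ^ q := by
    grw [sum_abs_rpow_le_of_sum_sq_le hH (hp.le.trans hpq) hq head_sq_le, hS]
    push_cast
    rfl
  have tail_le : ∑ j ∈ Sᶜ, |x j| ^ q ≤ s * H ^ q := by
    calc ∑ j ∈ Sᶜ, |x j| ^ q ≤ H ^ (q - p) * ∑ j ∈ Sᶜ, |x j| ^ p :=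
          sum_abs_rpow_le_of_abs_le hp hpq abs_le
      _ ≤ H ^ (q - p) * ∑ j ∈ U, |x j| ^ p := by gcongr
      _ ≤ H ^ (q - p) * (s * H ^ p) := by gcongr
      _ = s * H ^ q := by rw [mul_left_comm, ← rpow_add hH, sub_add_cancel]
  rw [← Finset.sum_add_sum_compl S]
  linarith

end Blocks

section Ellipsoid

variable {m n s : ℕ} {σ : ℕ → ℝ} {p q : ℝ≥0∞}

lemma lpnorm_eq_sum_rpow (hp : p ≠ ∞) (x : Fin m → ℝ) :
    lpnorm p x = (∑ j, |x j| ^ p.toReal) ^ (1 / p.toReal) := if_neg hp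

lemma sum_abs_div_rpow_le_one_of_mem_ellipsoid (hp0 : p ≠ 0) (hp : p ≠ ∞) {τ x : Fin m → ℝ}
    (hx : x ∈ ellipsoid p τ) : ∑ j, |x j / τ j| ^ p.toReal ≤ 1 := by
  have p_pos : 0 < p.toReal := ENNReal.toReal_pos hp0 hp
  have hx : lpnorm p (fun j => x j / τ j) ≤ 1 := hx
  rw [lpnorm_eq_sum_rpow hp] at hx
  contrapose! hx
  exact one_lt_rpow hx (by positivity)

lemma sum_tail_abs_rpow_le_of_mem_ellipsoid (hp0 : p ≠ 0) (hp : p ≠ ∞) (hσ : Antitone σ)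
    (σ_pos : ∀ j, 0 < σ j) {x : Fin m → ℝ} (hx : x ∈ ellipsoid p (fun j : Fin m => σ j)) :
    ∑ j ∈ {j : Fin m | s ≤ (j : ℕ)}, |x j| ^ p.toReal ≤ σ s ^ p.toReal := by
  calc ∑ j ∈ {j : Fin m | s ≤ (j : ℕ)}, |x j| ^ p.toReal
      ≤ ∑ j ∈ {j : Fin m | s ≤ (j : ℕ)}, σ s ^ p.toReal * |x j / σ j| ^ p.toReal := by
        gcongr with j hj
        have hj : s ≤ (j : ℕ) := by simpa using hj
        rw [← mul_rpow (σ_pos s).le (abs_nonneg _)]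
        gcongr
        rw [abs_div, abs_of_pos (σ_pos j), ← mul_div_assoc, le_div_iff₀' (σ_pos j)]
        gcongr
        exact hσ hj
    _ = σ s ^ p.toReal * ∑ j ∈ {j : Fin m | s ≤ (j : ℕ)}, |x j / σ j| ^ p.toReal := by
        rw [Finset.mul_sum]
    _ ≤ σ s ^ p.toReal * ∑ j : Fin m, |x j / σ j| ^ p.toReal := by
        have := (σ_pos s).le
        gcongr
        exact Finset.filter_subset _ _
    _ ≤ σ s ^ p.toReal := by
        have := (σ_pos s).le
        exact mul_le_of_le_one_right (by positivity)
          (sum_abs_div_rpow_le_one_of_mem_ellipsoid hp0 hp hx)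

lemma toEuclideanLin_toLp_eq_zero_of_mem_kerSet {A : Fin n → Fin m → ℝ} {x : Fin m → ℝ}
    (hx : x ∈ kerSet A) : Matrix.toEuclideanLin (.of A) (toLp 2 x) = 0 := by
  ext i
  exact hx i

lemma card_compl_filter_le (m s : ℕ) :
    ({j : Fin m | s ≤ (j : ℕ)} : Finset (Fin m))ᶜ.card ≤ s := by
  simp [Fin.card_filter_val_lt]

lemma HasRestrictedIsometry.radq_ellipsoid_le {A : Fin n → Fin m → ℝ} {a b : ℝ}
    (hA : HasRestrictedIsometry (Matrix.toEuclideanLin (.of A)) (2 * s) a b) (ha : 0 < a)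
    (hb : 0 ≤ b) (hs : 1 ≤ s) (hp0 : 0 < p) (hp1 : p ≤ 1) (hpq : p ≤ q) (hq2 : q ≤ 2)
    (hσ : Antitone σ) (σ_pos : ∀ j, 0 < σ j) :
    radq q (ellipsoid p (fun j : Fin m => σ j)) (kerSet A) ≤
      (3 + (b / a) ^ 2) ^ (1 / q.toReal) *
        (σ s * (s : ℝ) ^ (1 / q.toReal - 1 / p.toReal)) := by
  have p_ne_top : p ≠ ∞ := ne_top_of_le_ne_top ENNReal.one_ne_top hp1
  have q_ne_top : q ≠ ∞ := ne_top_of_le_ne_top ENNReal.ofNat_ne_top hq2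
  have p_pos : 0 < p.toReal := ENNReal.toReal_pos hp0.ne' p_ne_top
  have p_le_q : p.toReal ≤ q.toReal := ENNReal.toReal_mono q_ne_top hpq
  have q_pos : 0 < q.toReal := p_pos.trans_le p_le_q
  have s_pos : (0 : ℝ) < s := by positivity
  have := σ_pos s
  set H := σ s * (s : ℝ) ^ (-(1 / p.toReal)) with H_def
  have H_pos : 0 < H := by positivity
  have H_rpow : s * H ^ p.toReal = σ s ^ p.toReal := by
    rw [H_def, mul_rpow (σ_pos s).le (by positivity), ← rpow_mul s_pos.le, neg_mul,
      one_div_mul_cancel p_pos.ne', rpow_neg_one]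
    field_simp
  refine Real.sSup_le ?_ (by positivity)
  rintro _ ⟨x, ⟨x_mem, x_ker⟩, rfl⟩
  have sum_le := hA.sum_abs_rpow_le ha hb hs p_pos (ENNReal.toReal_mono ENNReal.one_ne_top hp1)
    p_le_q (ENNReal.toReal_mono ENNReal.ofNat_ne_top hq2)
    (toEuclideanLin_toLp_eq_zero_of_mem_kerSet x_ker) (card_compl_filter_le m s) H_pos
    ((sum_tail_abs_rpow_le_of_mem_ellipsoid hp0.ne' p_ne_top hσ σ_pos x_mem).trans H_rpow.ge)
  calc lpnorm q x ≤ ((3 + (b / a) ^ 2) * (s * H ^ q.toReal)) ^ (1 / q.toReal) := by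
        rw [lpnorm_eq_sum_rpow q_ne_top]
        gcongr
    _ = (3 + (b / a) ^ 2) ^ (1 / q.toReal) * ((s : ℝ) ^ (1 / q.toReal) * H) := by
        rw [mul_rpow (by positivity) (by positivity), mul_rpow s_pos.le (by positivity),
          one_div, rpow_rpow_inv H_pos.le q_pos.ne']
    _ = (3 + (b / a) ^ 2) ^ (1 / q.toReal) *
          (σ s * (s : ℝ) ^ (1 / q.toReal - 1 / p.toReal)) := by
        rw [H_def, sub_eq_add_neg, rpow_add s_pos]
        ring

lemma ofReal_one_sub_le_measure {Ω : Type*} {_ : MeasurableSpace Ω} {μ : Measure Ω}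
    [IsProbabilityMeasure μ] {E : Set Ω} {δ : ℝ} (hE : μ.real Eᶜ ≤ δ) :
    ENNReal.ofReal (1 - δ) ≤ μ E := by
  refine ENNReal.ofReal_le_of_le_toReal ?_
  have : μ.real Set.univ ≤ μ.real E + μ.real Eᶜ :=
    Set.union_compl_self E ▸ measureReal_union_le E Eᶜ
  rw [probReal_univ] at this
  change 1 - δ ≤ μ.real E
  linarith

lemma ofReal_le_gaussianMatrix_radq_ellipsoid_le (hn : 1 ≤ n) (hnm : n ≤ m) (hs : 1 ≤ s)
    (hsn : s * (320000 * log (exp 1 * m / n)) ≤ n) (hp0 : 0 < p) (hp1 : p ≤ 1) (hpq : p ≤ q)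
    (hq2 : q ≤ 2) (hσ : Antitone σ) (σ_pos : ∀ j, 0 < σ j) :
    ENNReal.ofReal (1 - 2 * exp (-(n / 2))) ≤ gaussianMatrix n m {A |
      radq q (ellipsoid p (fun j : Fin m => σ j)) (kerSet A) ≤
        2503 ^ (1 / q.toReal) * (σ s * (s : ℝ) ^ (1 / q.toReal - 1 / p.toReal))} := by
  have isometry_fails : (gaussianMatrix n m).real {A | ¬ HasRestrictedIsometry
      (Matrix.toEuclideanLin (.of A)) (2 * s) (√n / 10) (5 * √n)} ≤ 2 * exp (-(n / 2)) :=
    gaussianMatrix_real_not_hasRestrictedIsometry_le hn hnm (by push_cast; linarith)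
  refine (ofReal_one_sub_le_measure isometry_fails).trans (measure_mono fun A hA => ?_)
  have hA := HasRestrictedIsometry.radq_ellipsoid_le hA (by positivity) (by positivity)
    hs hp0 hp1 hpq hq2 hσ σ_pos
  have ratio : 3 + (5 * √n / (√n / 10)) ^ 2 = 2503 := by field_simp; norm_num
  rwa [ratio] at hA

end Ellipsoid

section PolynomialDecay

lemma exists_nat_mul_le_le_two_mul {t x : ℝ} (ht : 0 < t) (htx : t ≤ x) :
    ∃ s : ℕ, 1 ≤ s ∧ s * t ≤ x ∧ x ≤ 2 * (s * t) := by
  have one_le_floor : 1 ≤ ⌊x / t⌋₊ := Nat.le_floor (by simpa using (one_le_div ht).mpr htx)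
  have one_le_floor' : (1 : ℝ) ≤ ⌊x / t⌋₊ := by exact_mod_cast one_le_floor
  refine ⟨⌊x / t⌋₊, one_le_floor, ?_, ?_⟩
  · exact (le_div_iff₀ ht).mp (Nat.floor_le (div_nonneg (ht.le.trans htx) ht.le))
  · rw [← mul_assoc, ← div_le_iff₀ ht]
    linarith [Nat.lt_floor_add_one (x / t)]

lemma antitone_natCast_add_one_rpow_neg {lam : ℝ} (hlam : 0 ≤ lam) :
    Antitone fun j : ℕ => ((j : ℝ) + 1) ^ (-lam) := fun i j hij =>
  rpow_le_rpow_of_nonpos (by positivity) (by gcongr) (neg_nonpos.mpr hlam)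

lemma add_one_rpow_neg_mul_rpow_le {t r lam β : ℝ} (ht : 0 < t) (hlam : 0 ≤ lam) (hβ : β ≤ lam)
    (htr : t⁻¹ ≤ r) : (t + 1) ^ (-lam) * t ^ β ≤ r ^ (lam - β) := by
  calc (t + 1) ^ (-lam) * t ^ β ≤ t ^ (-lam) * t ^ β := by
        gcongr ?_ * _
        exact rpow_le_rpow_of_nonpos ht (by linarith) (neg_nonpos.mpr hlam)
    _ = t⁻¹ ^ (lam - β) := by rw [← rpow_add ht, inv_rpow ht.le, ← rpow_neg ht.le]; ring_nf
    _ ≤ r ^ (lam - β) := by gcongr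

end PolynomialDecay

theorem statement3_general :
    ∃ C D : ℝ, 0 < C ∧ 0 < D ∧ ∀ p q : ℝ≥0∞, 0 < p → p ≤ 1 → p ≤ q → q ≤ 2 →
      ∀ lam : ℝ, 0 ≤ lam → ∃ K : ℝ, 0 < K ∧
        ∀ m n : ℕ, 1 ≤ n → n ≤ m → D * log (exp 1 * m / n) ≤ n →
          ENNReal.ofReal (1 - 2 * exp (-C * n)) ≤
            gaussianMatrix n m {A |
              radq q (ellipsoid p (fun j : Fin m => ((j : ℕ) + 1 : ℝ) ^ (-lam))) (kerSet A) ≤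
                K * (log (exp 1 * m / n) / n) ^ (lam + 1 / p.toReal - 1 / q.toReal)} := by
  refine ⟨1 / 2, 320000, by norm_num, by norm_num, fun p q hp0 hp1 hpq hq2 lam hlam =>
    ⟨2503 ^ (1 / q.toReal) * 640000 ^ (lam + 1 / p.toReal - 1 / q.toReal), by positivity,
    fun m n hn hnm hDn => ?_⟩⟩
  have log_ge_one : 1 ≤ log (exp 1 * m / n) := one_le_log_exp_one_mul_div hn hnm
  obtain ⟨s, hs, s_mul_le, le_s_mul⟩ := exists_nat_mul_le_le_two_mul (by positivity) hDn
  rw [show -(1 / 2 : ℝ) * n = -(n / 2) by ring]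
  refine (ofReal_le_gaussianMatrix_radq_ellipsoid_le hn hnm hs s_mul_le hp0 hp1 hpq hq2
    (antitone_natCast_add_one_rpow_neg hlam) fun j => by positivity).trans
    (measure_mono <| Set.ofPred_subset_ofPred.mpr fun A hA => hA.trans ?_)
  have q_ne_top : q ≠ ∞ := ne_top_of_le_ne_top ENNReal.ofNat_ne_top hq2
  have inv_q_le_inv_p : 1 / q.toReal ≤ 1 / p.toReal :=
    one_div_le_one_div_of_le (ENNReal.toReal_pos hp0.ne' (ne_top_of_le_ne_top q_ne_top hpq))
      (ENNReal.toReal_mono q_ne_top hpq)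
  have inv_s_le : (s : ℝ)⁻¹ ≤ 640000 * (log (exp 1 * m / n) / n) := by
    rw [← mul_div_assoc, inv_le_comm₀ (by positivity) (by positivity), inv_div,
      div_le_iff₀ (by positivity)]
    linarith
  rw [mul_assoc, ← mul_rpow (by norm_num) (by positivity), add_sub_assoc, ← neg_sub (1 / q.toReal),
    ← sub_eq_add_neg]
  gcongr
  exact add_one_rpow_neg_mul_rpow_le (by positivity) hlam (by linarith) inv_s_le

/-- For `0 < p ≤ 1`, `p < q ≤ 2` and polynomially decaying semiaxes
`σ_j = j^{-λ}` (0-indexed), with probability at least `1 - 2 exp(-C n)` one has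
`rad_q(E^m_{p,σ}, ker G_{n,m}) ≤ K (log(e m/n)/n)^{λ + 1/p - 1/q}`,
provided `n ≥ D log(e m/n)`. -/
theorem statement3 (p q : ℝ≥0∞) (hp0 : 0 < p) (hp1 : p ≤ 1) (hpq : p < q) (hq2 : q ≤ 2)
    (lam : ℝ) (hlam : 0 < lam) :
    ∃ C D K : ℝ, 0 < C ∧ 0 < D ∧ 0 < K ∧
      ∀ (m n : ℕ), 1 ≤ n → n < m →
        D * Real.log (Real.exp 1 * m / n) ≤ n →
        ENNReal.ofReal (1 - 2 * Real.exp (-C * n)) ≤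
          gaussianMatrix n m {A |
            radq q (ellipsoid p (fun j : Fin m => ((j : ℕ) + 1 : ℝ) ^ (-lam))) (kerSet A) ≤
              K * (Real.log (Real.exp 1 * m / n) / n) ^
                (lam + 1 / p.toReal - 1 / q.toReal)} := by
  obtain ⟨C, D, hC, hD, h⟩ := statement3_general
  obtain ⟨K, hK, hK'⟩ := h p q hp0 hp1 hpq.le hq2 lam hlam.le
  exact ⟨C, D, K, hC, hD, hK, fun m n hn hnm => hK' m n hn hnm.le⟩
end

section
/- Let p = 1. There exists an absolute constant C ∈ (0,∞) such that for every m ∈ ℕ and all semiaxes σ₁ ≥ σ₂ ≥ … ≥ σ_m > 0, E[sup_{y ∈ E^m_{1,σ}} Σ_{j=1}^m g_j·y_j] ≤ C·sup_{1 ≤ j ≤ m} σ_j·√(log j + 1), where g₁,…,g_m are independent standard Gaussian random variables. -/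
open MeasureTheory ProbabilityTheory
open scoped ENNReal NNReal

/-!
The supremum over the `ℓ_1`-ellipsoid is attained at a vertex `± σ_j e_j`, so it equals
`max_j σ_j |g_j|`. Put `Z = ∑_j j⁻² exp (t g_j²)`. Bounding `Z` below by its `j`-th term gives
`t g_j² ≤ log Z + 2 log j`, hence `|g_j| ≤ (Z + 2) t^(-1/2) √(log j + 1)` for all `j`
simultaneously. Since `∑ j⁻²` converges, `E Z` is bounded independently of `m` as soon as
`E exp (t g_j²)` is bounded uniformly in `j`.
-/

section SupportFunction

variable {m : ℕ} {σ : Fin m → ℝ}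

lemma mem_ellipsoid_one {y : Fin m → ℝ} : y ∈ ellipsoid 1 σ ↔ ∑ j, |y j / σ j| ≤ 1 := by
  simp [ellipsoid, lpnorm]

lemma sum_mul_le_iSup_of_mem_ellipsoid_one (hσ : ∀ j, 0 < σ j) (g : Fin m → ℝ)
    {y : Fin m → ℝ} (hy : y ∈ ellipsoid 1 σ) :
    ∑ j, g j * y j ≤ ⨆ j, σ j * |g j| := by
  have hsup_nonneg : 0 ≤ ⨆ j, σ j * |g j| :=
    Real.iSup_nonneg fun j => mul_nonneg (hσ j).le (abs_nonneg _)
  calc ∑ j, g j * y j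
      ≤ ∑ j, (σ j * |g j|) * |y j / σ j| := Finset.sum_le_sum fun j _ => by
        have := (hσ j).ne'
        calc g j * y j ≤ |g j * y j| := le_abs_self _
          _ = (σ j * |g j|) * |y j / σ j| := by
            rw [abs_mul, abs_div, abs_of_pos (hσ j)]
            field_simp
    _ ≤ ∑ j, (⨆ i, σ i * |g i|) * |y j / σ j| := by
        gcongr with j
        exact le_ciSup (f := fun i => σ i * |g i|) (Set.finite_range _).bddAbove j
    _ = (⨆ i, σ i * |g i|) * ∑ j, |y j / σ j| := (Finset.mul_sum ..).symm
    _ ≤ ⨆ j, σ j * |g j| := mul_le_of_le_one_right hsup_nonneg (mem_ellipsoid_one.1 hy)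

lemma single_mul_sign_mem_ellipsoid_one (j : Fin m) (a : ℝ) :
    Pi.single j (σ j * SignType.sign a) ∈ ellipsoid 1 σ := by
  rw [mem_ellipsoid_one, Finset.sum_eq_single j (fun i _ hij => by simp [hij]) (by simp),
    Pi.single_eq_same, mul_div_right_comm, abs_mul]
  exact mul_le_one₀ (by rw [abs_div]; exact div_self_le_one _) (abs_nonneg _)
    (by rcases lt_trichotomy a 0 with h | h | h <;> simp [h])

lemma sSup_image_ellipsoid_one (hσ : ∀ j, 0 < σ j) (g : Fin m → ℝ) :
    sSup ((fun y => ∑ j, g j * y j) '' ellipsoid 1 σ) = ⨆ j, σ j * |g j| := by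
  have hle : ∀ s ∈ (fun y => ∑ j, g j * y j) '' ellipsoid 1 σ, s ≤ ⨆ j, σ j * |g j| := by
    rintro _ ⟨y, hy, rfl⟩
    exact sum_mul_le_iSup_of_mem_ellipsoid_one hσ g hy
  apply le_antisymm
  · exact Real.sSup_le hle (Real.iSup_nonneg fun j => mul_nonneg (hσ j).le (abs_nonneg _))
  · refine Real.iSup_le (fun j => le_csSup ⟨_, hle⟩
      ⟨_, single_mul_sign_mem_ellipsoid_one j (g j), ?_⟩)
      (Real.sSup_nonneg' ⟨0, ⟨0, mem_ellipsoid_one.2 (by simp), by simp⟩, le_rfl⟩)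
    simp only [Pi.single_apply, mul_ite, mul_zero, Finset.sum_ite_eq', Finset.mem_univ, if_true]
    rw [mul_left_comm, self_mul_sign]

end SupportFunction

section MaximalInequality

open Real

lemma abs_le_mul_sqrt_log_add_one {t x z u : ℝ} (ht : 0 < t) (hu : 1 ≤ u)
    (h : exp (t * x ^ 2) / u ^ 2 ≤ z) :
    |x| ≤ (z + 2) / √t * √(log u + 1) := by
  have hlogu : 0 ≤ log u := log_nonneg hu
  have hz : 0 < z := lt_of_lt_of_le (by positivity) h
  have hlogz : t * x ^ 2 - 2 * log u ≤ log z := by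
    have := log_le_log (by positivity) h
    rwa [log_div (by positivity) (by positivity), log_exp, log_pow, Nat.cast_ofNat] at this
  have hsq : t * x ^ 2 ≤ (z + 2) ^ 2 * (log u + 1) := by
    calc t * x ^ 2 ≤ z + 2 * log u := by linarith [log_le_self hz.le]
      _ ≤ (z + 2) * (log u + 1) := by nlinarith
      _ ≤ (z + 2) ^ 2 * (log u + 1) := by gcongr; nlinarith
  refine abs_le_of_sq_le_sq ?_ (by positivity)
  rw [mul_pow, div_pow, sq_sqrt ht.le, sq_sqrt (by positivity), div_mul_eq_mul_div,
    le_div_iff₀' ht]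
  exact hsq

lemma sum_one_div_add_one_sq_le (m : ℕ) :
    ∑ j : Fin m, 1 / ((j : ℝ) + 1) ^ 2 ≤ π ^ 2 / 6 := by
  have hshift : HasSum (fun n : ℕ => 1 / ((n : ℝ) + 1) ^ 2) (π ^ 2 / 6) := by
    simpa using (hasSum_nat_add_iff' 1).2 hasSum_zeta_two
  rw [Fin.sum_univ_eq_sum_range (fun n : ℕ => 1 / ((n : ℝ) + 1) ^ 2)]
  exact sum_le_hasSum _ (fun n _ => by positivity) hshift

/-- The weighted exponential moment `∑ exp (t x_j ^ 2) / j ^ 2` of a vector `x`, which controls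
all coordinates of `x` at once. The index is shifted by one since `Fin m` starts at `0`. -/
noncomputable def weightedExpSq (t : ℝ) {m : ℕ} (x : Fin m → ℝ) : ℝ :=
  ∑ j : Fin m, exp (t * x j ^ 2) / ((j : ℝ) + 1) ^ 2

lemma weightedExpSq_nonneg (t : ℝ) {m : ℕ} (x : Fin m → ℝ) : 0 ≤ weightedExpSq t x :=
  Finset.sum_nonneg fun _ _ => by positivity

lemma iSup_mul_abs_le_weightedExpSq {m : ℕ} {a : Fin m → ℝ} (ha : ∀ j, 0 ≤ a j) {t : ℝ}
    (ht : 0 < t) (x : Fin m → ℝ) :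
    ⨆ j, a j * |x j| ≤
      (weightedExpSq t x + 2) / √t * ⨆ j : Fin m, a j * √(log ((j : ℕ) + 1) + 1) := by
  have hZ : 0 ≤ weightedExpSq t x := weightedExpSq_nonneg t x
  refine Real.iSup_le (fun j => ?_)
    (mul_nonneg (by positivity) (Real.iSup_nonneg fun j => mul_nonneg (ha j) (sqrt_nonneg _)))
  have hterm : exp (t * x j ^ 2) / ((j : ℝ) + 1) ^ 2 ≤ weightedExpSq t x :=
    Finset.single_le_sum (f := fun j : Fin m => exp (t * x j ^ 2) / ((j : ℝ) + 1) ^ 2)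
      (fun _ _ => by positivity) (Finset.mem_univ j)
  calc a j * |x j|
      ≤ a j * ((weightedExpSq t x + 2) / √t * √(log ((j : ℕ) + 1) + 1)) :=
        mul_le_mul_of_nonneg_left (abs_le_mul_sqrt_log_add_one ht (by simp) hterm) (ha j)
    _ = (weightedExpSq t x + 2) / √t * (a j * √(log ((j : ℕ) + 1) + 1)) := mul_left_comm ..
    _ ≤ (weightedExpSq t x + 2) / √t * ⨆ j : Fin m, a j * √(log ((j : ℕ) + 1) + 1) := by
        gcongr
        exact le_ciSup (f := fun j : Fin m => a j * √(log ((j : ℕ) + 1) + 1))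
          (Set.finite_range _).bddAbove j

variable {Ω : Type*} {mΩ : MeasurableSpace Ω} {μ : Measure Ω} {m : ℕ} {X : Fin m → Ω → ℝ}
  {t B : ℝ}

lemma integrable_weightedExpSq (hX : ∀ j, Integrable (fun ω => exp (t * X j ω ^ 2)) μ) :
    Integrable (fun ω => weightedExpSq t fun j => X j ω) μ :=
  integrable_finsetSum _ fun j _ => (hX j).div_const _

lemma integral_weightedExpSq_le (hX : ∀ j, Integrable (fun ω => exp (t * X j ω ^ 2)) μ)
    (hB₀ : 0 ≤ B) (hB : ∀ j, ∫ ω, exp (t * X j ω ^ 2) ∂μ ≤ B) :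
    ∫ ω, weightedExpSq t (fun j => X j ω) ∂μ ≤ π ^ 2 / 6 * B := by
  calc ∫ ω, weightedExpSq t (fun j => X j ω) ∂μ
      = ∑ j : Fin m, (∫ ω, exp (t * X j ω ^ 2) ∂μ) / ((j : ℝ) + 1) ^ 2 := by
        simp only [weightedExpSq]
        rw [integral_finsetSum _ fun j _ => (hX j).div_const _]
        simp only [integral_div]
    _ ≤ ∑ j : Fin m, B / ((j : ℝ) + 1) ^ 2 := by
        gcongr with j
        exact hB j
    _ = (∑ j : Fin m, 1 / ((j : ℝ) + 1) ^ 2) * B := by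
        simp only [Finset.sum_mul, one_div_mul_eq_div]
    _ ≤ π ^ 2 / 6 * B := by
        gcongr
        exact sum_one_div_add_one_sq_le m

lemma integral_iSup_mul_abs_le [IsProbabilityMeasure μ] {a : Fin m → ℝ} (ha : ∀ j, 0 ≤ a j)
    (ht : 0 < t) (hX : ∀ j, Integrable (fun ω => exp (t * X j ω ^ 2)) μ) (hB₀ : 0 ≤ B)
    (hB : ∀ j, ∫ ω, exp (t * X j ω ^ 2) ∂μ ≤ B) :
    ∫ ω, ⨆ j, a j * |X j ω| ∂μ ≤
      (π ^ 2 / 6 * B + 2) / √t * ⨆ j : Fin m, a j * √(log ((j : ℕ) + 1) + 1) := by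
  set M := ⨆ j : Fin m, a j * √(log ((j : ℕ) + 1) + 1)
  have hM : 0 ≤ M := Real.iSup_nonneg fun j => mul_nonneg (ha j) (sqrt_nonneg _)
  have hZ := integrable_weightedExpSq hX
  calc ∫ ω, ⨆ j, a j * |X j ω| ∂μ
      ≤ ∫ ω, (weightedExpSq t (fun j => X j ω) + 2) / √t * M ∂μ :=
        integral_mono_of_nonneg
          (ae_of_all _ fun ω => Real.iSup_nonneg fun j => mul_nonneg (ha j) (abs_nonneg _))
          (((hZ.add (integrable_const 2)).div_const _).mul_const M)
          (ae_of_all _ fun ω => iSup_mul_abs_le_weightedExpSq ha ht fun j => X j ω)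
    _ = (∫ ω, weightedExpSq t (fun j => X j ω) ∂μ + 2) / √t * M := by
        rw [integral_mul_const, integral_div, integral_add hZ (integrable_const 2),
          integral_const, probReal_univ, one_smul]
    _ ≤ (π ^ 2 / 6 * B + 2) / √t * M := by
        gcongr
        exact integral_weightedExpSq_le hX hB₀ hB

theorem statement11_general [IsProbabilityMeasure μ] {σ : Fin m → ℝ} (hσ : ∀ j, 0 < σ j)
    (ht : 0 < t) (hX : ∀ j, Integrable (fun ω => exp (t * X j ω ^ 2)) μ) (hB₀ : 0 ≤ B)
    (hB : ∀ j, ∫ ω, exp (t * X j ω ^ 2) ∂μ ≤ B) :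
    ∫ ω, sSup ((fun y => ∑ j, X j ω * y j) '' ellipsoid 1 σ) ∂μ ≤
      (π ^ 2 / 6 * B + 2) / √t *
        sSup ((fun j : Fin m => σ j * √(log ((j : ℕ) + 1) + 1)) '' Set.univ) := by
  simp only [sSup_image_ellipsoid_one hσ, Set.image_univ, sSup_range]
  exact integral_iSup_mul_abs_le (fun j => (hσ j).le) ht hX hB₀ hB

end MaximalInequality

section Gaussian

open Real

variable {v : ℝ≥0} {t : ℝ}

lemma gaussianPDFReal_mul_exp_mul_sq (hv : v ≠ 0) (t x : ℝ) :
    gaussianPDFReal 0 v x * exp (t * x ^ 2) =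
      (√(2 * π * v))⁻¹ * exp (-((1 - 2 * t * v) / (2 * v)) * x ^ 2) := by
  rw [gaussianPDFReal, mul_assoc, ← exp_add]
  congr 2
  field

lemma integrable_exp_mul_sq_gaussianReal (ht : 2 * t * v < 1) :
    Integrable (fun x => exp (t * x ^ 2)) (gaussianReal 0 v) := by
  rcases eq_or_ne v 0 with rfl | hv
  · simp [integrable_dirac]
  rw [gaussianReal_of_var_ne_zero 0 hv,
    integrable_withDensity_iff_integrable_smul' (measurable_gaussianPDF 0 v)
      (ae_of_all _ fun _ => ENNReal.ofReal_lt_top)]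
  simp only [toReal_gaussianPDF, smul_eq_mul, gaussianPDFReal_mul_exp_mul_sq hv]
  exact (integrable_exp_neg_mul_sq (div_pos (sub_pos.2 ht) (by positivity))).const_mul _

lemma integral_exp_mul_sq_gaussianReal (ht : 2 * t * v < 1) :
    ∫ x, exp (t * x ^ 2) ∂gaussianReal 0 v = (√(1 - 2 * t * v))⁻¹ := by
  rcases eq_or_ne v 0 with rfl | hv
  · simp
  have : 0 < 1 - 2 * t * v := sub_pos.2 ht
  simp only [integral_gaussianReal_eq_integral_smul hv, smul_eq_mul,
    gaussianPDFReal_mul_exp_mul_sq hv, integral_const_mul, integral_gaussian]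
  rw [← sqrt_inv, ← sqrt_inv, ← sqrt_mul (by positivity)]
  congr 1
  field

variable {ι : Type*} [Fintype ι] {w : ι → ℝ≥0} {i : ι}

lemma integrable_exp_mul_eval_sq_pi_gaussianReal (ht : 2 * t * w i < 1) :
    Integrable (fun g : ι → ℝ => exp (t * g i ^ 2)) (Measure.pi fun j => gaussianReal 0 (w j)) :=
  integrable_comp_eval (μ := fun j => gaussianReal 0 (w j)) (f := fun x => exp (t * x ^ 2))
    (integrable_exp_mul_sq_gaussianReal ht)

lemma integral_exp_mul_eval_sq_pi_gaussianReal (ht : 2 * t * w i < 1) :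
    ∫ g : ι → ℝ, exp (t * g i ^ 2) ∂(Measure.pi fun j => gaussianReal 0 (w j)) =
      (√(1 - 2 * t * w i))⁻¹ :=
  (integral_comp_eval (μ := fun j => gaussianReal 0 (w j)) (f := fun x => exp (t * x ^ 2))
    (integrable_exp_mul_sq_gaussianReal ht).aestronglyMeasurable).trans
    (integral_exp_mul_sq_gaussianReal ht)

end Gaussian

/-- For `p = 1`, an absolute constant `C` bounds the expected supremum
of the Gaussian process indexed by the `ℓ_1`-ellipsoid:
`E sup_{y ∈ E^m_{1,σ}} ∑ g_j y_j ≤ C sup_{1 ≤ j ≤ m} σ_j √(log j + 1)`.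
(Here `σ : Fin m → ℝ` is 0-indexed, i.e. `σ ⟨j-1⟩` is the paper's `σ_j`.) -/
theorem statement11 :
    ∃ C : ℝ, 0 < C ∧
      ∀ (m : ℕ) (σ : Fin m → ℝ), (∀ j, 0 < σ j) → (∀ i j : Fin m, i ≤ j → σ j ≤ σ i) →
      (∫ g, sSup ((fun y => ∑ j, g j * y j) '' ellipsoid 1 σ)
          ∂(Measure.pi fun _ : Fin m => gaussianReal 0 1)) ≤
        C * sSup ((fun j : Fin m => σ j * Real.sqrt (Real.log ((j : ℕ) + 1) + 1)) ''
          Set.univ) := by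
  have hvar : 2 * (1 / 4) * ((1 : ℝ≥0) : ℝ) < 1 := by norm_num
  exact ⟨(Real.pi ^ 2 / 6 * (√(1 - 2 * (1 / 4) * ((1 : ℝ≥0) : ℝ)))⁻¹ + 2) / √(1 / 4),
    by positivity, fun m σ hσ _ => statement11_general hσ (by norm_num)
      (fun _ => integrable_exp_mul_eval_sq_pi_gaussianReal (w := fun _ => 1) hvar) (by positivity)
      fun _ => (integral_exp_mul_eval_sq_pi_gaussianReal (w := fun _ => 1) hvar).le⟩
end

section
/- Let 0 < p ≤ ∞ and λ > 0, and set σ_j = j^{−λ} for 1 ≤ j ≤ m. Then there exist constants c, C ∈ (0,∞) depending only on p and λ such that for every m ∈ ℕ and every integer 1 ≤ s ≤ m/2: c·s^{−λ} ≤ sup_{x ∈ E^m_{p,σ}} σ_s(x)_p ≤ C·s^{−λ}, where σ_s(x)_p := inf{‖x − z‖_p : z ∈ ℝ^m is s-sparse} is the error of best s-term approximation of x in the ℓ_p-(quasi-)norm. -/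
open scoped ENNReal NNReal

/-- The error of best `s`-term approximation of `x` in the `ℓ_p`-(quasi-)norm:
`σ_s(x)_p = inf {‖x - z‖_p : z is s-sparse}`. -/
noncomputable def bestApprox (p : ℝ≥0∞) {m : ℕ} (s : ℕ) (x : Fin m → ℝ) : ℝ :=
  sInf ((fun z => lpnorm p (x - z)) ''
    {z : Fin m → ℝ | ∃ S : Finset (Fin m), S.card ≤ s ∧ ∀ j ∉ S, z j = 0})

/-! For antitone semiaxes, keeping the coordinates before `n ≤ s` of a point of the ellipsoid leaves
an error of at most `σ n`. Conversely, for `s ≤ n`, the flat vector on the coordinates up to `n`,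
scaled to lie in the ellipsoid, keeps at least `n + 1 - s` of its `n + 1` equal entries under any
`s`-term approximation, so the error is at least `σ n * ((n + 1 - s) / (n + 1)) ^ (1 / p)`. For the
semiaxes `j ^ (-lam)`, choosing the (one-based) positions `s + 1` and `2 * s` respectively gives
bounds of order `s ^ (-lam)`. -/

section LpNorm

variable {p : ℝ≥0∞} {m : ℕ} {x y : Fin m → ℝ}

lemma lpnorm_nonneg : 0 ≤ lpnorm p x := by
  unfold lpnorm
  split_ifs
  · exact Real.iSup_nonneg fun j => abs_nonneg _
  · positivity

lemma lpnorm_le_lpnorm (h : ∀ j, |x j| ≤ |y j|) : lpnorm p x ≤ lpnorm p y := by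
  unfold lpnorm
  split_ifs
  · exact ciSup_mono (Set.finite_range _).bddAbove h
  · have entry_rpow (j : Fin m) : |x j| ^ p.toReal ≤ |y j| ^ p.toReal :=
      Real.rpow_le_rpow (abs_nonneg _) (h j) ENNReal.toReal_nonneg
    exact Real.rpow_le_rpow (by positivity) (Finset.sum_le_sum fun j _ => entry_rpow j)
      (by positivity)

lemma lpnorm_smul (hp : p ≠ 0) (a : ℝ) : lpnorm p (a • x) = |a| * lpnorm p x := by
  unfold lpnorm
  simp only [Pi.smul_apply, smul_eq_mul, abs_mul]
  split_ifs with hp_top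
  · exact (Real.mul_iSup_of_nonneg (abs_nonneg a) _).symm
  · have hp_pos : 0 < p.toReal := ENNReal.toReal_pos hp hp_top
    simp only [Real.mul_rpow (abs_nonneg a) (abs_nonneg _)]
    rw [← Finset.mul_sum, Real.mul_rpow (by positivity) (by positivity),
      ← Real.rpow_mul (abs_nonneg a), mul_one_div_cancel hp_pos.ne', Real.rpow_one]

/-- For `p = ∞` the exponent `1 / p.toReal` is `1 / 0 = 0`, so the formula gives the sup norm. -/
lemma lpnorm_indicator_one (hp : p ≠ 0) {T : Finset (Fin m)} (hT : T.Nonempty) :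
    lpnorm p ((T : Set (Fin m)).indicator 1) = (T.card : ℝ) ^ (1 / p.toReal) := by
  unfold lpnorm
  split_ifs with hp_top
  · obtain ⟨i, hi⟩ := hT
    have : Nonempty (Fin m) := ⟨i⟩
    rw [hp_top, ENNReal.toReal_top, div_zero, Real.rpow_zero]
    refine le_antisymm (ciSup_le fun j => ?_)
      (le_ciSup_of_le (Set.finite_range _).bddAbove i ?_)
    · by_cases hj : j ∈ T <;> simp [hj]
    · simp [hi]
  · have hp_pos : 0 < p.toReal := ENNReal.toReal_pos hp hp_top
    have entry (j : Fin m) :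
        |(T : Set (Fin m)).indicator (1 : Fin m → ℝ) j| ^ p.toReal =
          if j ∈ T then 1 else 0 := by
      by_cases hj : j ∈ T <;> simp [hj, hp_pos.ne']
    simp [entry]

end LpNorm

section BestApprox

variable {p : ℝ≥0∞} {m s : ℕ} {x : Fin m → ℝ}

/-- Among the approximants supported on `S`, the restriction of `x` to `S` is optimal. -/
lemma le_bestApprox_iff {b : ℝ} :
    b ≤ bestApprox p s x ↔
      ∀ S : Finset (Fin m), S.card ≤ s → b ≤ lpnorm p ((S : Set (Fin m))ᶜ.indicator x) := by
  have bounded : BddBelow ((fun z => lpnorm p (x - z)) ''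
      {z : Fin m → ℝ | ∃ S : Finset (Fin m), S.card ≤ s ∧ ∀ j ∉ S, z j = 0}) :=
    ⟨0, Set.forall_mem_image.2 fun _ _ => lpnorm_nonneg⟩
  have nonempty : {z : Fin m → ℝ | ∃ S : Finset (Fin m), S.card ≤ s ∧ ∀ j ∉ S, z j = 0}.Nonempty :=
    ⟨0, ∅, by simp⟩
  rw [bestApprox, le_csInf_iff bounded (nonempty.image _), Set.forall_mem_image]
  constructor
  · intro h S hS
    rw [Set.indicator_compl]
    exact h ⟨S, hS, fun j hj => Set.indicator_of_notMem (by simpa using hj) x⟩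
  · rintro h z ⟨S, hS, hz⟩
    refine (h S hS).trans (lpnorm_le_lpnorm fun j => ?_)
    by_cases hj : j ∈ S <;> simp [hj, hz]

lemma bestApprox_le_lpnorm_indicator_compl {S : Finset (Fin m)} (hS : S.card ≤ s) :
    bestApprox p s x ≤ lpnorm p ((S : Set (Fin m))ᶜ.indicator x) :=
  le_bestApprox_iff.1 le_rfl S hS

lemma le_bestApprox_smul_indicator_one (hp : p ≠ 0) (a : ℝ) {T : Finset (Fin m)}
    (hT : s < T.card) :
    |a| * ((T.card : ℝ) - s) ^ (1 / p.toReal) ≤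
      bestApprox p s (a • (T : Set (Fin m)).indicator 1) := by
  refine le_bestApprox_iff.2 fun S hS => ?_
  have card_diff : T.card ≤ (T \ S).card + S.card := Finset.card_le_card_sdiff_add_card
  have nonempty : (T \ S).Nonempty := Finset.card_pos.1 (by lia)
  have restrict : (S : Set (Fin m))ᶜ.indicator (a • (T : Set (Fin m)).indicator 1) =
      a • ((T \ S : Finset (Fin m)) : Set (Fin m)).indicator (1 : Fin m → ℝ) := by
    ext j
    by_cases hjS : j ∈ S <;> by_cases hjT : j ∈ T <;> simp [hjS, hjT]
  have remaining_nonneg : (0 : ℝ) ≤ T.card - s := sub_nonneg.2 (by exact_mod_cast hT.le)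
  have remaining_le : (T.card : ℝ) - s ≤ (T \ S).card :=
    sub_le_iff_le_add.2 (by exact_mod_cast card_diff.trans (by lia))
  rw [restrict, lpnorm_smul hp, lpnorm_indicator_one hp nonempty]
  gcongr

end BestApprox

section Ellipsoid

variable {p : ℝ≥0∞} {m s : ℕ} {σ : Fin m → ℝ}

lemma lpnorm_indicator_le_of_mem_ellipsoid (hp : p ≠ 0) {x : Fin m → ℝ} (hx : x ∈ ellipsoid p σ)
    {U : Set (Fin m)} {b : ℝ} (hb : 0 ≤ b) (hσ : ∀ j ∈ U, 0 < σ j) (hσb : ∀ j ∈ U, σ j ≤ b) :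
    lpnorm p (U.indicator x) ≤ b := by
  have entry (j : Fin m) : |U.indicator x j| ≤ |(b • fun i => x i / σ i) j| := by
    by_cases hj : j ∈ U
    · simp only [hj, Set.indicator_of_mem, Pi.smul_apply, smul_eq_mul, abs_mul, abs_div,
        abs_of_nonneg hb, abs_of_pos (hσ j hj)]
      rw [← mul_div_assoc, le_div_iff₀ (hσ j hj), mul_comm]
      gcongr
      exact hσb j hj
    · simp only [hj, not_false_eq_true, Set.indicator_of_notMem, abs_zero, abs_nonneg]
  calc lpnorm p (U.indicator x)
      ≤ lpnorm p (b • fun i => x i / σ i) := lpnorm_le_lpnorm entry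
    _ = b * lpnorm p (fun i => x i / σ i) := by rw [lpnorm_smul hp, abs_of_nonneg hb]
    _ ≤ b := mul_le_of_le_one_right hb hx

lemma smul_indicator_one_mem_ellipsoid (hp : p ≠ 0) {T : Finset (Fin m)} (hT : T.Nonempty) {b : ℝ}
    (hb : 0 < b) (hσ : ∀ j ∈ T, b ≤ σ j) :
    (b * (T.card : ℝ) ^ (-(1 / p.toReal))) • (T : Set (Fin m)).indicator 1 ∈ ellipsoid p σ := by
  have card_pos : (0 : ℝ) < T.card := by exact_mod_cast hT.card_pos
  set a : ℝ := (T.card : ℝ) ^ (-(1 / p.toReal))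
  have a_pos : 0 < a := by positivity
  have entry (j : Fin m) :
      |((b * a) • (T : Set (Fin m)).indicator (1 : Fin m → ℝ)) j / σ j| ≤
        |(a • (T : Set (Fin m)).indicator (1 : Fin m → ℝ)) j| := by
    by_cases hj : j ∈ T
    · have σ_pos : 0 < σ j := hb.trans_le (hσ j hj)
      simp only [Pi.smul_apply, Finset.mem_coe, hj, Set.indicator_of_mem, Pi.one_apply,
        smul_eq_mul, mul_one, abs_div, abs_mul, abs_of_pos hb, abs_of_pos a_pos, abs_of_pos σ_pos]
      rw [div_le_iff₀ σ_pos, mul_comm]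
      gcongr
      exact hσ j hj
    · simp [hj]
  refine (lpnorm_le_lpnorm entry).trans_eq ?_
  rw [lpnorm_smul hp, lpnorm_indicator_one hp hT, abs_of_pos a_pos, ← Real.rpow_add card_pos,
    neg_add_cancel, Real.rpow_zero]

lemma bddAbove_bestApprox_image_ellipsoid (hp : p ≠ 0) (hσ : ∀ j, 0 < σ j) :
    BddAbove (bestApprox p s '' ellipsoid p σ) := by
  refine ⟨∑ j, σ j, Set.forall_mem_image.2 fun x hx => ?_⟩
  refine (bestApprox_le_lpnorm_indicator_compl (S := ∅) (by simp)).trans ?_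
  exact lpnorm_indicator_le_of_mem_ellipsoid hp hx (Finset.sum_nonneg fun j _ => (hσ j).le)
    (fun j _ => hσ j)
    fun j _ => Finset.single_le_sum (fun i _ => (hσ i).le) (Finset.mem_univ j)

lemma sSup_bestApprox_ellipsoid_le (hp : p ≠ 0) (hσ : ∀ j, 0 < σ j) (hσ_anti : Antitone σ)
    {n : Fin m} (hn : (n : ℕ) ≤ s) : sSup (bestApprox p s '' ellipsoid p σ) ≤ σ n := by
  refine Real.sSup_le (Set.forall_mem_image.2 fun x hx => ?_) (hσ n).le
  have card_head : (Finset.Iio n).card ≤ s := by simpa using hn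
  refine (bestApprox_le_lpnorm_indicator_compl card_head).trans ?_
  exact lpnorm_indicator_le_of_mem_ellipsoid hp hx (hσ n).le (fun j _ => hσ j)
    fun j hj => hσ_anti (by simpa using hj)

lemma le_sSup_bestApprox_ellipsoid (hp : p ≠ 0) (hσ : ∀ j, 0 < σ j) (hσ_anti : Antitone σ)
    {n : Fin m} (hn : s ≤ (n : ℕ)) :
    σ n * (((n : ℕ) + 1 - s) / ((n : ℕ) + 1) : ℝ) ^ (1 / p.toReal) ≤
      sSup (bestApprox p s '' ellipsoid p σ) := by
  set T := Finset.Iic n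
  have card_T : T.card = (n : ℕ) + 1 := Fin.card_Iic n
  have flat_mem := smul_indicator_one_mem_ellipsoid hp (T := T) Finset.nonempty_Iic (hσ n)
    fun j hj => hσ_anti (Finset.mem_Iic.1 hj)
  have flat_error := le_bestApprox_smul_indicator_one (p := p) (s := s) (T := T) hp
    (σ n * (T.card : ℝ) ^ (-(1 / p.toReal))) (by lia)
  have remaining_nonneg : (0 : ℝ) ≤ (n : ℕ) + 1 - s :=
    sub_nonneg.2 (by exact_mod_cast hn.trans n.val.le_succ)
  have scale_nonneg : 0 ≤ σ n * ((n : ℕ) + 1 : ℝ) ^ (-(1 / p.toReal)) :=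
    mul_nonneg (hσ n).le (by positivity)
  calc σ n * (((n : ℕ) + 1 - s) / ((n : ℕ) + 1) : ℝ) ^ (1 / p.toReal)
      = |σ n * (T.card : ℝ) ^ (-(1 / p.toReal))| * ((T.card : ℝ) - s) ^ (1 / p.toReal) := by
        rw [card_T, Nat.cast_add_one, abs_of_nonneg scale_nonneg,
          Real.div_rpow remaining_nonneg (by positivity), Real.rpow_neg (by positivity)]
        ring
    _ ≤ bestApprox p s _ := flat_error
    _ ≤ sSup (bestApprox p s '' ellipsoid p σ) :=
        le_csSup (bddAbove_bestApprox_image_ellipsoid hp hσ) (Set.mem_image_of_mem _ flat_mem)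

end Ellipsoid

lemma antitone_val_add_one_rpow_neg (m : ℕ) {lam : ℝ} (hlam : 0 ≤ lam) :
    Antitone fun j : Fin m => ((j : ℕ) + 1 : ℝ) ^ (-lam) := fun i j hij =>
  Real.rpow_le_rpow_of_nonpos (by positivity) (by gcongr; exact_mod_cast hij) (by linarith)

/-- For `0 < p ≤ ∞`, `λ > 0` and `σ_j = j^{-λ}` (0-indexed), for all
`1 ≤ s ≤ m/2`: `c s^{-λ} ≤ sup_{x ∈ E^m_{p,σ}} σ_s(x)_p ≤ C s^{-λ}`, with constants
depending only on `p` and `λ`. -/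
theorem statement13 (p : ℝ≥0∞) (hp : 0 < p) (lam : ℝ) (hlam : 0 < lam) :
    ∃ c C : ℝ, 0 < c ∧ 0 < C ∧
      ∀ (m s : ℕ), 1 ≤ s → 2 * s ≤ m →
        c * (s : ℝ) ^ (-lam) ≤
            sSup (bestApprox p s ''
              ellipsoid p (fun j : Fin m => ((j : ℕ) + 1 : ℝ) ^ (-lam))) ∧
          sSup (bestApprox p s ''
              ellipsoid p (fun j : Fin m => ((j : ℕ) + 1 : ℝ) ^ (-lam))) ≤
            C * (s : ℝ) ^ (-lam) := by
  refine ⟨2 ^ (-lam) * (1 / 2) ^ (1 / p.toReal), 1, by positivity, one_pos, fun m s hs hsm => ?_⟩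
  have s_pos : (0 : ℝ) < s := by exact_mod_cast hs
  have semiaxes_pos (j : Fin m) : 0 < ((j : ℕ) + 1 : ℝ) ^ (-lam) := by positivity
  have semiaxes_anti := antitone_val_add_one_rpow_neg m hlam.le
  constructor
  · have lower := le_sSup_bestApprox_ellipsoid hp.ne' semiaxes_pos semiaxes_anti (s := s)
      (n := ⟨2 * s - 1, by lia⟩) (by simp only; lia)
    have position : ((2 * s - 1 : ℕ) : ℝ) + 1 = 2 * s := by
      exact_mod_cast Nat.sub_add_cancel (by lia : 1 ≤ 2 * s)
    have remaining_ratio : (2 * s - s : ℝ) / (2 * s) = 1 / 2 := by field_simp; ring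
    rw [position, remaining_ratio, Real.mul_rpow zero_le_two s_pos.le] at lower
    exact (mul_right_comm _ _ _).trans_le lower
  · calc sSup _ ≤ ((s : ℝ) + 1) ^ (-lam) :=
          sSup_bestApprox_ellipsoid_le hp.ne' semiaxes_pos semiaxes_anti (n := ⟨s, by lia⟩) le_rfl
      _ ≤ (s : ℝ) ^ (-lam) := Real.rpow_le_rpow_of_nonpos s_pos (by linarith) (by linarith)
      _ = 1 * (s : ℝ) ^ (-lam) := (one_mul _).symm
end
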